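/- arXiv:2408.04642 — 2 statements merged into one kernel-verified Lean document; each statement's English description precedes it below -/
import Mathlib

section
/- For i = 1, 2, 3, let G_i be a 2-factor Hamiltonian cubic bipartite graph with k vertices and let e_i = u_iv_i ∈ E(G_i). Let G be the graph obtained from the disjoint union of the graphs G_i − e_i by adding two new vertices w and z and the six new edges wu_i and zv_i for i = 1, 2, 3. Then G is a connected cubic bipartite graph of edge-connectivity two that is 2-factor isomorphic but not Hamiltonian. -/
open SimpleGraph

/-- A 2-factor of `G`: a 2-regular spanning subgraph, given as a simple graph `F ≤ G`
in which every vertex has exactly two neighbours. -/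
def IsTwoFactor {V : Type*} (G F : SimpleGraph V) : Prop :=
  F ≤ G ∧ ∀ v : V, (F.neighborSet v).ncard = 2

/-- A graph admitting a 2-factor is 2-factor Hamiltonian if every 2-factor of it is a
Hamiltonian cycle, i.e. every 2-factor is connected. -/
def TwoFactorHamiltonian {V : Type*} (G : SimpleGraph V) : Prop :=
  (∃ F, IsTwoFactor G F) ∧ ∀ F, IsTwoFactor G F → F.Connected

/-- A graph admitting a 2-factor is 2-factor isomorphic if any two of its 2-factors are
isomorphic as graphs. -/
def TwoFactorIsomorphic {V : Type*} (G : SimpleGraph V) : Prop :=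
  (∃ F, IsTwoFactor G F) ∧
    ∀ F F', IsTwoFactor G F → IsTwoFactor G F' → Nonempty (F ≃g F')

/-- `G` has edge-connectivity two: it is connected, deleting any one edge leaves it
connected, and some set of two edges disconnects it. -/
def EdgeConnectivityTwo {V : Type*} (G : SimpleGraph V) : Prop :=
  G.Connected ∧ (∀ e ∈ G.edgeSet, (G.deleteEdges {e}).Connected) ∧
    ∃ E : Set (Sym2 V), E ⊆ G.edgeSet ∧ E.ncard = 2 ∧ ¬ (G.deleteEdges E).Connected

/-!
A 2-factor is a disjoint union of cycles and so has no bridge. Hence a 2-factor `F` of `G` contains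
both or neither of `wuᵢ` and `vᵢz`, the two edges leaving `Gᵢ - eᵢ`. Since `w` has degree two in
`F`, exactly one index `i₀` is missed. For every `i`, the part of `F` in `Gᵢ - eᵢ`, completed by
`eᵢ` unless `i = i₀`, is a 2-factor of `Gᵢ`, that is, a Hamiltonian cycle. So `F` consists of a
cycle of length `k` on the vertices of `G_{i₀}` and one cycle through all other vertices: `F` is not
Hamiltonian, and its isomorphism type depends only on `k`.

By Hall's theorem every edge of a regular bipartite graph of degree at least two lies in a 2-factor,
so such a graph has no bridge, whereas deleting `wu₁` and `v₁z` disconnects `G`.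
-/

section RegularBipartite

variable {V : Type*} {G : SimpleGraph V}

lemma ncard_neighborSet_sdiff_of_isPerfectMatching {M : G.Subgraph} (hM : M.IsPerfectMatching)
    (v : V) : ((G \ M.spanningCoe).neighborSet v).ncard = (G.neighborSet v).ncard - 1 := by
  obtain ⟨m, hm, hm_unique⟩ := Subgraph.isPerfectMatching_iff.1 hM v
  have hsdiff : (G \ M.spanningCoe).neighborSet v = G.neighborSet v \ {m} := by
    ext w
    simp only [mem_neighborSet, sdiff_adj, Subgraph.spanningCoe_adj, Set.mem_sdiff,
      Set.mem_singleton_iff]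
    exact and_congr_right' <| not_congr ⟨hm_unique w, fun h => h ▸ hm⟩
  rw [hsdiff, Set.ncard_sdiff_singleton_of_mem (show m ∈ G.neighborSet v from M.adj_sub hm)]

variable [Finite V] {r : ℕ} {x y : V}

lemma exists_isPerfectMatching_of_regular (hr : r ≠ 0)
    (hreg : ∀ v, (G.neighborSet v).ncard = r) (hbip : G.Colorable 2) :
    ∃ M : G.Subgraph, M.IsPerfectMatching := by
  classical
  have := Fintype.ofFinite V
  obtain ⟨p₁, p₂, hp⟩ := IsBipartite.exists_isBipartiteWith hbip
  have hdeg (v : V) : (G.neighborFinset v).card = r := by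
    rw [← hreg v, Set.ncard_eq_toFinset_card', neighborFinset]
  refine exists_isPerfectMatching_of_forall_ncard_le hp fun s => ?_
  set t := ⋃ v ∈ s, G.neighborSet v
  have hcount : s.toFinset.card * r ≤ t.toFinset.card * r := by
    refine Finset.card_mul_le_card_mul G.Adj (fun v hv => ?_) fun w _ => ?_
    · rw [← hdeg v]
      refine Finset.card_le_card fun w hw => ?_
      rw [mem_neighborFinset] at hw
      simp only [Finset.mem_bipartiteAbove, Set.mem_toFinset]
      exact ⟨Set.mem_biUnion (Set.mem_toFinset.1 hv) hw, hw⟩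
    · rw [← hdeg w]
      refine Finset.card_le_card fun v hv => ?_
      rw [mem_neighborFinset]
      exact ((Finset.mem_bipartiteBelow _).1 hv).2.symm
  simpa only [Set.ncard_eq_toFinset_card'] using
    Nat.le_of_mul_le_mul_right hcount (Nat.pos_of_ne_zero hr)

lemma exists_isTwoFactor_adj (hr : 2 ≤ r) (hreg : ∀ v, (G.neighborSet v).ncard = r)
    (hbip : G.Colorable 2) (hxy : G.Adj x y) : ∃ F, IsTwoFactor G F ∧ F.Adj x y := by
  induction r, hr using Nat.le_induction generalizing G with
  | base => exact ⟨G, ⟨le_rfl, hreg⟩, hxy⟩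
  | succ r hr ih =>
    have of_notMem_matching {M : G.Subgraph} (hM : M.IsPerfectMatching) (hxyM : ¬M.Adj x y) :
        ∃ F, IsTwoFactor G F ∧ F.Adj x y := by
      obtain ⟨F, ⟨hF, hFreg⟩, hFxy⟩ := ih (G := G \ M.spanningCoe)
        (fun v => by rw [ncard_neighborSet_sdiff_of_isPerfectMatching hM, hreg, Nat.add_sub_cancel])
        (hbip.mono_left sdiff_le) ⟨hxy, hxyM⟩
      exact ⟨F, ⟨hF.trans sdiff_le, hFreg⟩, hFxy⟩
    obtain ⟨M, hM⟩ := exists_isPerfectMatching_of_regular r.succ_ne_zero hreg hbip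
    by_cases hxyM : M.Adj x y
    · obtain ⟨M', hM'⟩ := exists_isPerfectMatching_of_regular (G := G \ M.spanningCoe) (r := r)
        (by omega)
        (fun v => by rw [ncard_neighborSet_sdiff_of_isPerfectMatching hM, hreg, Nat.add_sub_cancel])
        (hbip.mono_left sdiff_le)
      exact of_notMem_matching
        ((Subgraph.IsPerfectMatching.toSubgraph_iff (M'.spanningCoe_le.trans sdiff_le)).2 hM')
        fun h => (M'.adj_sub h).2 hxyM
    · exact of_notMem_matching hM hxyM

end RegularBipartite

section EdgeConnectivity

variable {V : Type*} {G F : SimpleGraph V} {x y : V}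

lemma mem_of_reachable_of_forall_adj {S : Set V} (hS : ∀ ⦃x⦄, x ∈ S → ∀ ⦃y⦄, G.Adj x y → y ∈ S)
    (hx : x ∈ S) (hxy : G.Reachable x y) : y ∈ S := by
  obtain ⟨p⟩ := hxy
  by_contra hy
  obtain ⟨d, -, hfst, hsnd⟩ := p.exists_boundary_dart S hx hy
  exact hsnd (hS hfst d.adj)

lemma isEdgeConnected_of_forall_adj {k : ℕ} (hG : G.Preconnected)
    (h : ∀ x y, G.Adj x y → G.IsEdgeReachable k x y) : G.IsEdgeConnected k := fun x y =>
  mem_of_reachable_of_forall_adj (S := {v | G.IsEdgeReachable k x v})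
    (fun _ hv _ hadj => hv.trans (h _ _ hadj)) .rfl (hG x y)

lemma IsTwoFactor.isCycles (hF : IsTwoFactor G F) : F.IsCycles := fun v _ => hF.2 v

variable [Finite V]

lemma isEdgeReachable_two_of_isCycles (hF : F.IsCycles) (hxy : F.Adj x y) :
    F.IsEdgeReachable 2 x y := by
  by_contra h
  exact (isBridge_iff_not_isEdgeReachable_two hxy).2 h (hF.reachable_deleteEdges hxy)

lemma isEdgeConnected_two_of_regular_bipartite {r : ℕ} (hr : 2 ≤ r) (hG : G.Preconnected)
    (hreg : ∀ v, (G.neighborSet v).ncard = r) (hbip : G.Colorable 2) : G.IsEdgeConnected 2 := by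
  refine isEdgeConnected_of_forall_adj hG fun x y hxy => ?_
  obtain ⟨F, hF, hFxy⟩ := exists_isTwoFactor_adj hr hreg hbip hxy
  exact (isEdgeReachable_two_of_isCycles hF.isCycles hFxy).mono hF.1

lemma IsTwoFactor.connected_deleteEdges_singleton (hF : IsTwoFactor G F) (hconn : F.Connected)
    (e : Sym2 V) : (F.deleteEdges {e}).Connected where
  preconnected := isEdgeConnected_two.1 (isEdgeConnected_of_forall_adj hconn.preconnected
    fun _ _ => isEdgeReachable_two_of_isCycles hF.isCycles) e
  nonempty := hconn.nonempty

end EdgeConnectivity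

section Classification

variable {V V' ι : Type*}

lemma eq_of_le_of_ncard_neighborSet_le [Finite V] {F G : SimpleGraph V} (hle : F ≤ G)
    (hcard : ∀ v, (G.neighborSet v).ncard ≤ (F.neighborSet v).ncard) : F = G := by
  ext x y
  have : F.neighborSet x = G.neighborSet x :=
    Set.eq_of_subset_of_ncard_le (fun _ h => hle h) (hcard x)
  exact Set.ext_iff.1 this y

lemma ncard_neighborSet_cycleGraph {n : ℕ} (hn : 3 ≤ n) (i : Fin n) :
    ((cycleGraph n).neighborSet i).ncard = 2 := by
  obtain ⟨n, rfl⟩ := Nat.exists_eq_add_of_le' hn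
  rw [Set.ncard_eq_toFinset_card']
  exact cycleGraph_degree_three_le

lemma exists_isHamiltonianCycle_of_isCycles [Finite V] [DecidableEq V] {F : SimpleGraph V}
    (hF : F.IsCycles) (hconn : F.Connected) {v : V} (hv : (F.neighborSet v).Nonempty) :
    ∃ p : F.Walk v v, p.IsHamiltonianCycle := by
  obtain ⟨p, hp, hp_verts⟩ := hF.exists_cycle_toSubgraph_verts_eq_connectedComponentSupp
    (c := F.connectedComponentMk v) rfl hv
  refine ⟨p, hp, hp.isPath_tail.isHamiltonian_of_mem fun x => ?_⟩
  have hx : x ∈ p.support := by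
    rw [← Walk.mem_verts_toSubgraph, hp_verts, ConnectedComponent.mem_supp_iff,
      ConnectedComponent.eq]
    exact hconn.preconnected x v
  rw [Walk.support_tail_of_not_nil _ hp.not_nil]
  rw [← Walk.cons_tail_support, List.mem_cons] at hx
  exact hx.elim (fun h => h ▸ Walk.end_mem_tail_support hp.not_nil) id

lemma nonempty_iso_cycleGraph [Fintype V] {F : SimpleGraph V}
    (hF : ∀ v, (F.neighborSet v).ncard = 2) (hconn : F.Connected) :
    Nonempty (cycleGraph (Fintype.card V) ≃g F) := by
  classical
  obtain ⟨v⟩ := hconn.nonempty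
  obtain ⟨p, hp⟩ := exists_isHamiltonianCycle_of_isCycles (fun v _ => hF v) hconn
    (Set.nonempty_of_ncard_ne_zero (by rw [hF v]; exact two_ne_zero))
  have hcard : 3 ≤ Fintype.card V := hp.length_eq ▸ hp.isCycle.three_le_length
  obtain ⟨f⟩ := (cycleGraph_isContained_iff hcard).2 ⟨v, p, hp.isCycle, hp.length_eq⟩
  have hf : Function.Bijective f :=
    (Fintype.bijective_iff_injective_and_card f).2 ⟨f.injective, Fintype.card_fin _⟩
  let e : Fin (Fintype.card V) ≃ V := .ofBijective f hf
  have heq : cycleGraph (Fintype.card V) = F.comap e := by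
    refine eq_of_le_of_ncard_neighborSet_le (fun _ _ h => f.toHom.map_adj h) fun i => ?_
    rw [ncard_neighborSet_cycleGraph hcard, ← hF (e i), ← Nat.card_coe_set_eq,
      ← Nat.card_coe_set_eq, Nat.card_congr ((Iso.comap e F).mapNeighborSet i)]
    rfl
  rw [heq]
  exact ⟨Iso.comap e F⟩

lemma nonempty_iso_of_preconnected [Finite V] [Finite V'] {F : SimpleGraph V}
    {F' : SimpleGraph V'} (hF : ∀ v, (F.neighborSet v).ncard = 2)
    (hF' : ∀ v, (F'.neighborSet v).ncard = 2) (hconn : F.Preconnected)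
    (hconn' : F'.Preconnected) (hcard : Nat.card V = Nat.card V') : Nonempty (F ≃g F') := by
  have := Fintype.ofFinite V
  have := Fintype.ofFinite V'
  rw [Nat.card_eq_fintype_card, Nat.card_eq_fintype_card] at hcard
  cases isEmpty_or_nonempty V
  · have : IsEmpty V' := Fintype.card_eq_zero_iff.1 (hcard ▸ Fintype.card_eq_zero)
    exact ⟨Equiv.equivOfIsEmpty V V', fun {x} => isEmptyElim x⟩
  · have : Nonempty V' := Fintype.card_pos_iff.1 (hcard ▸ Fintype.card_pos)
    obtain ⟨e⟩ := nonempty_iso_cycleGraph hF ⟨hconn⟩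
    obtain ⟨e'⟩ := nonempty_iso_cycleGraph hF' ⟨hconn'⟩
    rw [hcard] at e
    exact ⟨e.symm.trans e'⟩

lemma ncard_neighborSet_induce_fiber {F : SimpleGraph V} {p : V → ι}
    (hp : ∀ ⦃x y⦄, F.Adj x y → p x = p y) {i : ι} (x : {x | p x = i}) :
    ((F.induce {x | p x = i}).neighborSet x).ncard = (F.neighborSet x).ncard := by
  rw [← Set.ncard_image_of_injective _ Subtype.val_injective]
  congr 1
  ext y
  simpa using fun h => (hp h).symm.trans x.2

lemma preconnected_induce_fiber {F : SimpleGraph V} {p : V → ι}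
    (hp : ∀ x y, F.Reachable x y ↔ p x = p y) (i : ι) :
    (F.induce {x | p x = i}).Preconnected := by
  rintro ⟨x, rfl⟩
  have hsupp : {y | p y = p x} = (F.connectedComponentMk x).supp := by
    ext y
    rw [ConnectedComponent.mem_supp_iff, ConnectedComponent.eq, hp]
    rfl
  have hconn : (F.induce {y | p y = p x}).Preconnected :=
    hsupp ▸ (F.connectedComponentMk x).connected_toSimpleGraph.preconnected
  exact hconn _

lemma nonempty_iso_of_forall_fiber {F : SimpleGraph V} {F' : SimpleGraph V'} {p : V → ι}
    {p' : V' → ι} (hp : ∀ ⦃x y⦄, F.Adj x y → p x = p y) (hp' : ∀ ⦃x y⦄, F'.Adj x y → p' x = p' y)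
    (hiso : ∀ i, Nonempty (F.induce {x | p x = i} ≃g F'.induce {x | p' x = i})) :
    Nonempty (F ≃g F') := by
  let e i := (hiso i).some
  let φ : V ≃ V' := Equiv.ofFiberEquiv fun i => (e i).toEquiv
  have hφ : ∀ i x (hx : p x = i), φ x = e i ⟨x, hx⟩ := by
    rintro _ x rfl
    rfl
  refine ⟨φ, fun {x y} => ?_⟩
  by_cases hxy : p x = p y
  · rw [hφ _ x hxy, hφ _ y rfl]
    exact (e (p y)).map_adj_iff
  · refine iff_of_false (fun h => hxy ?_) fun h => hxy (hp h)
    rw [← Equiv.ofFiberEquiv_map (fun i => (e i).toEquiv) x,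
      ← Equiv.ofFiberEquiv_map (fun i => (e i).toEquiv) y]
    exact hp' h

lemma nonempty_iso_of_reachable_iff [Finite V] [Finite V'] {F : SimpleGraph V}
    {F' : SimpleGraph V'} (hF : ∀ v, (F.neighborSet v).ncard = 2)
    (hF' : ∀ v, (F'.neighborSet v).ncard = 2) {p : V → ι} {p' : V' → ι}
    (hp : ∀ x y, F.Reachable x y ↔ p x = p y) (hp' : ∀ x y, F'.Reachable x y ↔ p' x = p' y)
    (hcard : ∀ i, {x | p x = i}.ncard = {x | p' x = i}.ncard) : Nonempty (F ≃g F') := by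
  have hadj ⦃x y⦄ (h : F.Adj x y) : p x = p y := (hp x y).1 h.reachable
  have hadj' ⦃x y⦄ (h : F'.Adj x y) : p' x = p' y := (hp' x y).1 h.reachable
  refine nonempty_iso_of_forall_fiber hadj hadj' fun i => nonempty_iso_of_preconnected
    (fun x => (ncard_neighborSet_induce_fiber hadj x).trans (hF x))
    (fun x => (ncard_neighborSet_induce_fiber hadj' x).trans (hF' x))
    (preconnected_induce_fiber hp i) (preconnected_induce_fiber hp' i) ?_
  simpa only [Nat.card_coe_set_eq] using hcard i

end Classification

section Branch

variable {V W : Type*} {G F : SimpleGraph W} {S : Set W} {a b w z : W}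

/-- `S` is a branch of `G` with terminals `a`, `b` and poles `w`, `z`: the only edges of `G` that
may leave `S` are `aw` and `bz`, and the terminals are distinct and non-adjacent. Neither `aw` nor
`bz` is required to be an edge, so that branches of `G` are also branches of its subgraphs. -/
structure IsBranch (G : SimpleGraph W) (S : Set W) (a b w z : W) : Prop where
  left_mem : a ∈ S
  right_mem : b ∈ S
  terminal_ne : a ≠ b
  not_adj : ¬G.Adj a b
  left_pole_notMem : w ∉ S
  right_pole_notMem : z ∉ S
  eq_of_adj : ∀ ⦃x⦄, x ∈ S → ∀ ⦃y⦄, y ∉ S → G.Adj x y → x = a ∧ y = w ∨ x = b ∧ y = z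

namespace IsBranch

lemma symm (h : IsBranch G S a b w z) : IsBranch G S b a z w where
  left_mem := h.right_mem
  right_mem := h.left_mem
  terminal_ne := h.terminal_ne.symm
  not_adj hadj := h.not_adj hadj.symm
  left_pole_notMem := h.right_pole_notMem
  right_pole_notMem := h.left_pole_notMem
  eq_of_adj _ hx _ hy hadj := (h.eq_of_adj hx hy hadj).symm

lemma anti (h : IsBranch G S a b w z) (hle : F ≤ G) : IsBranch F S a b w z where
  __ := h
  not_adj hadj := h.not_adj (hle hadj)
  eq_of_adj _ hx _ hy hadj := h.eq_of_adj hx hy (hle hadj)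

lemma not_reachable_of_not_adj {x y : W} (h : IsBranch G S a b w z) (haw : ¬G.Adj a w)
    (hbz : ¬G.Adj b z) (hx : x ∈ S) (hy : y ∉ S) : ¬G.Reachable x y := by
  refine fun hxy => hy (mem_of_reachable_of_forall_adj (fun s hs t hst => ?_) hx hxy)
  by_contra ht
  obtain ⟨rfl, rfl⟩ | ⟨rfl, rfl⟩ := h.eq_of_adj hs ht hst
  exacts [haw hst, hbz hst]

lemma not_connected_deleteEdges (h : IsBranch G S a b w z) :
    ¬(G.deleteEdges {s(a, w), s(b, z)}).Connected := fun hconn =>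
  (h.anti (deleteEdges_le _)).not_reachable_of_not_adj (by simp) (by simp) h.left_mem
    h.left_pole_notMem (hconn.preconnected a w)

lemma edgeConnectivityTwo (h : IsBranch G S a b w z) (haw : G.Adj a w) (hbz : G.Adj b z)
    (hG : G.Connected) (hG₂ : G.IsEdgeConnected 2) : EdgeConnectivityTwo G := by
  have := hG.nonempty
  refine ⟨hG, fun e _ => ⟨isEdgeConnected_two.1 hG₂ e⟩, {s(a, w), s(b, z)},
    Set.pair_subset haw hbz, Set.ncard_pair fun heq => ?_, h.not_connected_deleteEdges⟩
  obtain ⟨hab, -⟩ | ⟨haz, -⟩ := Sym2.eq_iff.1 heq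
  · exact h.terminal_ne hab
  · exact h.right_pole_notMem (haz ▸ h.left_mem)

-- Otherwise `aw` would be the only edge leaving `S`, hence a bridge of a union of cycles.
lemma adj_right_of_adj_left [Finite W] (h : IsBranch G S a b w z) (hG : G.IsCycles)
    (haw : G.Adj a w) : G.Adj b z := by
  by_contra hbz
  exact (h.anti (deleteEdges_le {s(a, w)})).not_reachable_of_not_adj (by simp)
    (fun h => hbz h.1) h.left_mem h.left_pole_notMem (hG.reachable_deleteEdges haw)

lemma adj_left_iff_adj_right [Finite W] (h : IsBranch G S a b w z) (hG : G.IsCycles) :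
    G.Adj a w ↔ G.Adj b z :=
  ⟨h.adj_right_of_adj_left hG, h.symm.adj_right_of_adj_left hG⟩

end IsBranch

/-- The graph induced by `G` on a branch `Set.range f` with left terminal `f u` and left pole `w`,
closed up by the edge `uv` in case `G` joins `f u` to `w`. When `G` also joins `f v` to the right
pole, this is the contraction to the edge `uv` of the path outside the branch. -/
def branchClosure (G : SimpleGraph W) (f : V → W) (u v : V) (w : W) : SimpleGraph V :=
  G.comap f ⊔ fromEdgeSet {e | e = s(u, v) ∧ G.Adj (f u) w}

variable {f : V ↪ W} {u v x y : V}

lemma branchClosure_adj : (branchClosure G f u v w).Adj x y ↔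
    G.Adj (f x) (f y) ∨ (s(x, y) = s(u, v) ∧ G.Adj (f u) w) ∧ x ≠ y := by
  rw [branchClosure, sup_adj, comap_adj, fromEdgeSet_adj]
  rfl

lemma branchClosure_mono (hle : F ≤ G) : branchClosure F f u v w ≤ branchClosure G f u v w := by
  intro x y
  simp only [branchClosure_adj]
  exact Or.imp (@hle _ _) (And.imp_left (And.imp_right (@hle _ _)))

lemma branchClosure_swap (hparity : G.Adj (f u) w ↔ G.Adj (f v) z) :
    branchClosure G f v u z = branchClosure G f u v w := by
  rw [branchClosure, branchClosure, hparity, Sym2.eq_swap]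

lemma branchClosure_deleteEdges (huv : ¬G.Adj (f u) (f v)) :
    (branchClosure G f u v w).deleteEdges {s(u, v)} = G.comap f := by
  ext x y
  simp only [deleteEdges_adj, branchClosure_adj, comap_adj, Set.mem_singleton_iff]
  refine ⟨fun ⟨h, hne⟩ => h.resolve_right fun h => hne h.1.1, fun h => ⟨.inl h, fun heq => ?_⟩⟩
  obtain ⟨rfl, rfl⟩ | ⟨rfl, rfl⟩ := Sym2.eq_iff.1 heq
  exacts [huv h, huv h.symm]

namespace IsBranch

lemma neighborSet_left [DecidableEq V] (h : IsBranch G (Set.range f) (f u) (f v) w z) :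
    G.neighborSet (f u) = Function.update f v w '' (branchClosure G f u v w).neighborSet u := by
  have huv : u ≠ v := fun huv => h.terminal_ne (huv ▸ rfl)
  ext y
  simp only [mem_neighborSet, Set.mem_image, branchClosure_adj]
  constructor
  · intro hy
    by_cases hrange : y ∈ Set.range f
    · obtain ⟨x, rfl⟩ := hrange
      exact ⟨x, .inl hy, Function.update_of_ne (by rintro rfl; exact h.not_adj hy) _ _⟩
    · obtain ⟨-, rfl⟩ | ⟨heq, -⟩ := h.eq_of_adj h.left_mem hrange hy
      · exact ⟨v, .inr ⟨⟨rfl, hy⟩, huv⟩, Function.update_self ..⟩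
      · exact absurd heq h.terminal_ne
  · rintro ⟨x, hx, rfl⟩
    obtain rfl | hxv := eq_or_ne x v
    · rw [Function.update_self]
      exact hx.elim (fun hx => absurd hx h.not_adj) fun hx => hx.1.2
    · rw [Function.update_of_ne hxv]
      exact hx.resolve_right fun hx => hxv (Sym2.congr_right.1 hx.1.1)

lemma neighborSet_of_ne (h : IsBranch G (Set.range f) (f u) (f v) w z) (hu : x ≠ u) (hv : x ≠ v) :
    G.neighborSet (f x) = f '' (branchClosure G f u v w).neighborSet x := by
  ext y
  simp only [mem_neighborSet, Set.mem_image, branchClosure_adj]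
  constructor
  · intro hy
    obtain ⟨x', rfl⟩ : y ∈ Set.range f := by
      by_contra hrange
      obtain ⟨heq, -⟩ | ⟨heq, -⟩ := h.eq_of_adj (Set.mem_range_self x) hrange hy
      exacts [hu (f.injective heq), hv (f.injective heq)]
    exact ⟨x', .inl hy, rfl⟩
  · rintro ⟨x', hx' | ⟨⟨heq, -⟩, -⟩, rfl⟩
    · exact hx'
    · obtain h | h := Sym2.mem_iff.1 (heq ▸ Sym2.mem_mk_left x x')
      exacts [absurd h hu, absurd h hv]

lemma ncard_neighborSet_left (h : IsBranch G (Set.range f) (f u) (f v) w z) :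
    ((branchClosure G f u v w).neighborSet u).ncard = (G.neighborSet (f u)).ncard := by
  classical
  have hinj : Function.Injective (Function.update f v w) := by
    intro x y hxy
    simp only [Function.update_apply] at hxy
    split_ifs at hxy with hx hy hy
    · exact hx.trans hy.symm
    · exact absurd ⟨y, hxy.symm⟩ h.left_pole_notMem
    · exact absurd ⟨x, hxy⟩ h.left_pole_notMem
    · exact f.injective hxy
  rw [h.neighborSet_left, Set.ncard_image_of_injective _ hinj]

lemma ncard_neighborSet_branchClosure (h : IsBranch G (Set.range f) (f u) (f v) w z)
    (hparity : G.Adj (f u) w ↔ G.Adj (f v) z) (x : V) :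
    ((branchClosure G f u v w).neighborSet x).ncard = (G.neighborSet (f x)).ncard := by
  obtain rfl | hu := eq_or_ne x u
  · exact h.ncard_neighborSet_left
  obtain rfl | hv := eq_or_ne x v
  · rw [← branchClosure_swap hparity]
    exact h.symm.ncard_neighborSet_left
  · rw [h.neighborSet_of_ne hu hv, Set.ncard_image_of_injective _ f.injective]

end IsBranch

end Branch

section EdgeBranch

variable {V W : Type*} {G F : SimpleGraph W} {H : SimpleGraph V} {e : H.Dart} {f : V ↪ W} {w z : W}

/-- `f` embeds the graph `H - e` into `G` as a branch whose two terminals, the endpoints of `e`, are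
joined to the poles `w` and `z`. -/
structure IsEdgeBranch (G : SimpleGraph W) (e : H.Dart) (f : V ↪ W) (w z : W) : Prop where
  comap_eq : G.comap f = H.deleteEdges {e.edge}
  left_pole_notMem : w ∉ Set.range f
  right_pole_notMem : z ∉ Set.range f
  adj_left : G.Adj (f e.fst) w
  adj_right : G.Adj (f e.snd) z
  eq_of_adj : ∀ x, ∀ y ∉ Set.range f, G.Adj (f x) y → x = e.fst ∧ y = w ∨ x = e.snd ∧ y = z

namespace IsEdgeBranch

lemma isBranch (h : IsEdgeBranch G e f w z) :
    IsBranch G (Set.range f) (f e.fst) (f e.snd) w z where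
  left_mem := Set.mem_range_self _
  right_mem := Set.mem_range_self _
  terminal_ne := f.injective.ne e.fst_ne_snd
  not_adj hadj := by
    rw [← comap_adj (G := G), h.comap_eq] at hadj
    exact hadj.2 ⟨rfl, e.fst_ne_snd⟩
  left_pole_notMem := h.left_pole_notMem
  right_pole_notMem := h.right_pole_notMem
  eq_of_adj := by
    rintro _ ⟨x, rfl⟩ y hy hxy
    exact (h.eq_of_adj x y hy hxy).imp (.imp_left <| congrArg f) (.imp_left <| congrArg f)

lemma branchClosure_eq (h : IsEdgeBranch G e f w z) : branchClosure G f e.fst e.snd w = H := by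
  ext x y
  have hxy : G.Adj (f x) (f y) ↔ H.Adj x y ∧ s(x, y) ≠ e.edge := by
    rw [← comap_adj (G := G), h.comap_eq, deleteEdges_adj, Set.mem_singleton_iff]
  rw [branchClosure_adj, hxy]
  by_cases heq : s(x, y) = e.edge
  · have hadj : H.Adj x y := by
      rw [← mem_edgeSet, heq]
      exact e.edge_mem
    exact iff_of_true (.inr ⟨⟨heq, h.adj_left⟩, hadj.ne⟩) hadj
  · exact ⟨fun h => h.elim And.left fun h => absurd h.1.1 heq, fun h => .inl ⟨h, heq⟩⟩

lemma ncard_neighborSet (h : IsEdgeBranch G e f w z) (x : V) :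
    (G.neighborSet (f x)).ncard = (H.neighborSet x).ncard := by
  rw [← h.isBranch.ncard_neighborSet_branchClosure (iff_of_true h.adj_left h.adj_right),
    h.branchClosure_eq]

variable [Finite V] [Finite W]

-- Closing up the branch turns `F` into a 2-factor of `H`, which is a Hamiltonian cycle, and
-- deleting an edge of a cycle leaves it connected.
lemma connected_comap (h : IsEdgeBranch G e f w z) (hH : TwoFactorHamiltonian H)
    (hF : IsTwoFactor G F) : (F.comap f).Connected := by
  have hbranch := h.isBranch.anti hF.1
  have hclosure : IsTwoFactor H (branchClosure F f e.fst e.snd w) := by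
    refine ⟨(branchClosure_mono hF.1).trans_eq h.branchClosure_eq, fun x => ?_⟩
    rw [hbranch.ncard_neighborSet_branchClosure (hbranch.adj_left_iff_adj_right hF.isCycles), hF.2]
  rw [← branchClosure_deleteEdges (w := w) hbranch.not_adj]
  exact hclosure.connected_deleteEdges_singleton (hH.2 _ hclosure) _

lemma reachable_left_terminal (h : IsEdgeBranch G e f w z) (hH : TwoFactorHamiltonian H)
    (hF : IsTwoFactor G F) {y : W} (hy : y ∈ Set.range f) : F.Reachable (f e.fst) y := by
  obtain ⟨x, rfl⟩ := hy
  exact ((h.connected_comap hH hF).preconnected e.fst x).map (Hom.comap f F)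

end IsEdgeBranch

end EdgeBranch

section Theta

variable {W ι : Type*} {G F : SimpleGraph W} {S : ι → Set W} {a b : ι → W} {w z : W}

/-- `G` is a generalized theta graph: two poles `w` and `z` joined to each other by pairwise
disjoint branches `S i`, where `w` is adjacent exactly to the left terminals `a i` and `z` exactly
to the right terminals `b i`. -/
structure IsTheta (G : SimpleGraph W) (S : ι → Set W) (a b : ι → W) (w z : W) : Prop where
  branch : ∀ i, IsBranch G (S i) (a i) (b i) w z
  disjoint : Pairwise (Function.onFun Disjoint S)
  cover : ∀ x, x = w ∨ x = z ∨ ∃ i, x ∈ S i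
  neighborSet_left_pole : G.neighborSet w = Set.range a
  neighborSet_right_pole : G.neighborSet z = Set.range b

namespace IsTheta

lemma symm (h : IsTheta G S a b w z) : IsTheta G S b a z w where
  branch i := (h.branch i).symm
  disjoint := h.disjoint
  cover x := or_left_comm.1 (h.cover x)
  neighborSet_left_pole := h.neighborSet_right_pole
  neighborSet_right_pole := h.neighborSet_left_pole

lemma adj_left_pole (h : IsTheta G S a b w z) (i : ι) : G.Adj w (a i) := by
  rw [← mem_neighborSet, h.neighborSet_left_pole]
  exact Set.mem_range_self i

lemma injective_left_terminal (h : IsTheta G S a b w z) : Function.Injective a := by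
  intro i j hij
  by_contra hne
  exact Set.disjoint_left.1 (h.disjoint hne) (h.branch i).left_mem (hij ▸ (h.branch j).left_mem)

lemma ncard_neighborSet_left_pole (h : IsTheta G S a b w z) :
    (G.neighborSet w).ncard = Nat.card ι := by
  rw [h.neighborSet_left_pole, Set.ncard_range_of_injective h.injective_left_terminal]

lemma reachable_left_pole (h : IsTheta G S a b w z)
    (htraverse : ∀ i, ∀ x ∈ S i, F.Reachable (a i) x) {J : Set ι} (hJ : J.Nonempty)
    (hw : ∀ i ∈ J, F.Adj w (a i)) (hz : ∀ i ∈ J, F.Adj z (b i)) {x : W}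
    (hx : ∀ i, x ∈ S i → i ∈ J) : F.Reachable w x := by
  have reachable_of_mem {i} (hi : i ∈ J) {y} (hy : y ∈ S i) : F.Reachable w y :=
    (hw i hi).reachable.trans (htraverse i y hy)
  obtain rfl | rfl | ⟨i, hi⟩ := h.cover x
  · rfl
  · obtain ⟨i, hi⟩ := hJ
    exact (reachable_of_mem hi (h.branch i).right_mem).trans (hz i hi).symm.reachable
  · exact reachable_of_mem (hx i hi) hi

lemma connected [Nonempty ι] (h : IsTheta G S a b w z)
    (htraverse : ∀ i, ∀ x ∈ S i, G.Reachable (a i) x) : G.Connected :=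
  (connected_iff_exists_forall_reachable G).2 ⟨w, fun _ => h.reachable_left_pole htraverse
    Set.univ_nonempty (fun i _ => h.adj_left_pole i) (fun i _ => h.symm.adj_left_pole i)
    fun _ _ => Set.mem_univ _⟩

lemma exists_missed_branch (h : IsTheta G S a b w z) (hι : Nat.card ι = 3)
    (hF : IsTwoFactor G F) : ∃ i₀, ∀ i, F.Adj w (a i) ↔ i ≠ i₀ := by
  have : Finite ι := Nat.finite_of_card_ne_zero (by omega)
  have himage : a '' (a ⁻¹' F.neighborSet w) = F.neighborSet w :=
    Set.image_preimage_eq_of_subset (h.neighborSet_left_pole ▸ fun _ hx => hF.1 hx)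
  have hcard : (a ⁻¹' F.neighborSet w).ncard = 2 := by
    rw [← Set.ncard_image_of_injective _ h.injective_left_terminal, himage, hF.2]
  obtain ⟨i₀, hi₀⟩ : ∃ i₀, (a ⁻¹' F.neighborSet w)ᶜ = {i₀} :=
    Set.ncard_eq_one.1 (by rw [Set.ncard_compl, hcard, hι])
  exact ⟨i₀, fun i => not_iff_not.1 ((Set.ext_iff.1 hi₀ i).trans not_ne_iff.symm)⟩

variable [Finite W]

lemma not_reachable_of_missed_branch (h : IsTheta G S a b w z) (hF : IsTwoFactor G F) {i₀ : ι}
    (hi₀ : ¬F.Adj w (a i₀)) {x y : W} (hx : x ∈ S i₀) (hy : y ∉ S i₀) : ¬F.Reachable x y := by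
  have hbranch := (h.branch i₀).anti hF.1
  have hleft : ¬F.Adj (a i₀) w := fun hadj => hi₀ hadj.symm
  exact hbranch.not_reachable_of_not_adj hleft
    ((hbranch.adj_left_iff_adj_right hF.isCycles).not.1 hleft) hx hy

lemma not_exists_connected_isTwoFactor (h : IsTheta G S a b w z) (hι : Nat.card ι = 3) :
    ¬∃ F, IsTwoFactor G F ∧ F.Connected := by
  rintro ⟨F, hF, hconn⟩
  obtain ⟨i₀, hi₀⟩ := h.exists_missed_branch hι hF
  exact h.not_reachable_of_missed_branch hF ((hi₀ i₀).not.2 (not_not.2 rfl)) (h.branch i₀).left_mem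
    (h.branch i₀).left_pole_notMem (hconn.preconnected _ w)

lemma reachable_iff (h : IsTheta G S a b w z) (hF : IsTwoFactor G F)
    (htraverse : ∀ i, ∀ x ∈ S i, F.Reachable (a i) x) {i₀ : ι}
    (hi₀ : ∀ i, F.Adj w (a i) ↔ i ≠ i₀) (x y : W) :
    F.Reachable x y ↔ (x ∈ S i₀) = (y ∈ S i₀) := by
  have hmiss : ¬F.Adj w (a i₀) := (hi₀ i₀).not.2 (not_not.2 rfl)
  have hright i (hi : i ≠ i₀) : F.Adj z (b i) :=
    ((((h.branch i).anti hF.1).adj_left_iff_adj_right hF.isCycles).1 ((hi₀ i).2 hi).symm).symm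
  have hused : {i | i ≠ i₀}.Nonempty := by
    obtain ⟨y, hy⟩ := Set.nonempty_of_ncard_ne_zero ((hF.2 w).trans_ne two_ne_zero)
    obtain ⟨i, rfl⟩ : y ∈ Set.range a := h.neighborSet_left_pole ▸ hF.1 hy
    exact ⟨i, (hi₀ i).1 hy⟩
  have houter {x} (hx : x ∉ S i₀) : F.Reachable w x :=
    h.reachable_left_pole htraverse hused (fun i => (hi₀ i).2) hright
      fun i hi => by rintro rfl; exact hx hi
  refine ⟨fun hxy => propext
    ⟨fun hx => by_contra fun hy => h.not_reachable_of_missed_branch hF hmiss hx hy hxy,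
      fun hy => by_contra fun hx => h.not_reachable_of_missed_branch hF hmiss hy hx hxy.symm⟩,
    fun hxy => ?_⟩
  by_cases hx : x ∈ S i₀
  · exact (htraverse _ x hx).symm.trans (htraverse _ y (hxy ▸ hx))
  · exact (houter hx).symm.trans (houter (hxy ▸ hx))

lemma nonempty_iso (h : IsTheta G S a b w z) (hι : Nat.card ι = 3) {k : ℕ}
    (hk : ∀ i, (S i).ncard = k) {F F' : SimpleGraph W} (hF : IsTwoFactor G F)
    (hF' : IsTwoFactor G F') (htraverse : ∀ i, ∀ x ∈ S i, F.Reachable (a i) x)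
    (htraverse' : ∀ i, ∀ x ∈ S i, F'.Reachable (a i) x) : Nonempty (F ≃g F') := by
  obtain ⟨i₀, hi₀⟩ := h.exists_missed_branch hι hF
  obtain ⟨i₁, hi₁⟩ := h.exists_missed_branch hι hF'
  refine nonempty_iso_of_reachable_iff hF.2 hF'.2 (h.reachable_iff hF htraverse hi₀)
    (h.reachable_iff hF' htraverse' hi₁) fun P => ?_
  by_cases hP : P
  · simpa [hP] using (hk i₀).trans (hk i₁).symm
  · have hcompl : (S i₀)ᶜ.ncard = (S i₁)ᶜ.ncard := by rw [Set.ncard_compl, Set.ncard_compl, hk, hk]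
    simpa [hP, Set.compl_def] using hcompl

end IsTheta

end Theta

section ThetaSum

/-- The graph obtained from `D` by adjoining pairwise non-adjacent new vertices indexed by `ι`, the
`i`-th of which has the neighbourhood `N i` in `D`. -/
def adjoinVertices {V ι : Type*} (D : SimpleGraph V) (N : ι → Set V) : SimpleGraph (V ⊕ ι) where
  Adj
    | .inl x, .inl y => D.Adj x y
    | .inl x, .inr i => x ∈ N i
    | .inr i, .inl x => x ∈ N i
    | .inr _, .inr _ => False
  symm := ⟨by rintro (x | i) (y | j) <;> simp [D.adj_comm]⟩
  loopless := ⟨by rintro (x | _) <;> simp⟩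

lemma colorable_adjoinVertices {V ι : Type*} {D : SimpleGraph V} {N : ι → Set V} {n : ℕ}
    (C : D.Coloring (Fin n)) (c : ι → Fin n) (hc : ∀ i, ∀ x ∈ N i, C x ≠ c i) :
    (adjoinVertices D N).Colorable n := by
  refine ⟨.mk (Sum.elim C c) ?_⟩
  rintro (x | i) (y | j) hxy
  exacts [C.valid hxy, hc j x hxy, (hc i y hxy).symm, hxy.elim]

lemma exists_coloring_eq_zero_one {V : Type*} {H : SimpleGraph V} (hH : H.Colorable 2)
    (e : H.Dart) : ∃ C : H.Coloring (Fin 2), C e.fst = 0 ∧ C e.snd = 1 := by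
  obtain ⟨C⟩ := hH
  let σ : Equiv.Perm (Fin 2) := Equiv.swap (C e.fst) 0
  let C' : H.Coloring (Fin 2) := .mk (fun x => σ (C x)) fun h => σ.injective.ne (C.valid h)
  have hfst : C' e.fst = 0 := Equiv.swap_apply_left ..
  have hne : C' e.snd ≠ 0 := hfst ▸ (C'.valid e.adj).symm
  exact ⟨C', hfst, Fin.eq_one_of_ne_zero _ hne⟩

variable {V₁ V₂ V₃ : Type*} {G₁ : SimpleGraph V₁} {G₂ : SimpleGraph V₂} {G₃ : SimpleGraph V₃}

/-- The disjoint union of the graphs `Gᵢ - eᵢ` together with two new vertices, `Sum.inr true`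
joined to the first endpoints of the darts `eᵢ` and `Sum.inr false` joined to the second ones. -/
def thetaSum (e₁ : G₁.Dart) (e₂ : G₂.Dart) (e₃ : G₃.Dart) : SimpleGraph ((V₁ ⊕ V₂ ⊕ V₃) ⊕ Bool) :=
  adjoinVertices
    (G₁.deleteEdges {e₁.edge} ⊕g (G₂.deleteEdges {e₂.edge} ⊕g G₃.deleteEdges {e₃.edge}))
    fun pole => cond pole {.inl e₁.fst, .inr (.inl e₂.fst), .inr (.inr e₃.fst)}
      {.inl e₁.snd, .inr (.inl e₂.snd), .inr (.inr e₃.snd)}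

namespace thetaSum

/-- The inclusion of the first summand into the vertices of `thetaSum`. -/
def inj₁ : V₁ ↪ (V₁ ⊕ V₂ ⊕ V₃) ⊕ Bool := .trans .inl .inl

/-- The inclusion of the second summand into the vertices of `thetaSum`. -/
def inj₂ : V₂ ↪ (V₁ ⊕ V₂ ⊕ V₃) ⊕ Bool := .trans (.trans .inl .inr) .inl

/-- The inclusion of the third summand into the vertices of `thetaSum`. -/
def inj₃ : V₃ ↪ (V₁ ⊕ V₂ ⊕ V₃) ⊕ Bool := .trans (.trans .inr .inr) .inl

variable (V₁ V₂ V₃) in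
/-- The branches of `thetaSum`, one for each summand. -/
def branch : Fin 3 → Set ((V₁ ⊕ V₂ ⊕ V₃) ⊕ Bool) :=
  ![Set.range inj₁, Set.range inj₂, Set.range inj₃]

variable (e₁ : G₁.Dart) (e₂ : G₂.Dart) (e₃ : G₃.Dart)

/-- The neighbours of the pole `Sum.inr true` in the branches of `thetaSum`. -/
def leftTerminal : Fin 3 → (V₁ ⊕ V₂ ⊕ V₃) ⊕ Bool := ![inj₁ e₁.fst, inj₂ e₂.fst, inj₃ e₃.fst]

/-- The neighbours of the pole `Sum.inr false` in the branches of `thetaSum`. -/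
def rightTerminal : Fin 3 → (V₁ ⊕ V₂ ⊕ V₃) ⊕ Bool := ![inj₁ e₁.snd, inj₂ e₂.snd, inj₃ e₃.snd]

lemma isEdgeBranch₁ :
    IsEdgeBranch (thetaSum e₁ e₂ e₃) e₁ inj₁ (.inr true) (.inr false) where
  comap_eq := rfl
  left_pole_notMem := by simp [inj₁]
  right_pole_notMem := by simp [inj₁]
  adj_left := by simp [inj₁, thetaSum, adjoinVertices]
  adj_right := by simp [inj₁, thetaSum, adjoinVertices]
  eq_of_adj := by
    rintro x ((y | y | y) | (_ | _)) <;> simp [inj₁, thetaSum, adjoinVertices]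

lemma isEdgeBranch₂ :
    IsEdgeBranch (thetaSum e₁ e₂ e₃) e₂ inj₂ (.inr true) (.inr false) where
  comap_eq := rfl
  left_pole_notMem := by simp [inj₂]
  right_pole_notMem := by simp [inj₂]
  adj_left := by simp [inj₂, thetaSum, adjoinVertices]
  adj_right := by simp [inj₂, thetaSum, adjoinVertices]
  eq_of_adj := by
    rintro x ((y | y | y) | (_ | _)) <;> simp [inj₂, thetaSum, adjoinVertices]

lemma isEdgeBranch₃ :
    IsEdgeBranch (thetaSum e₁ e₂ e₃) e₃ inj₃ (.inr true) (.inr false) where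
  comap_eq := rfl
  left_pole_notMem := by simp [inj₃]
  right_pole_notMem := by simp [inj₃]
  adj_left := by simp [inj₃, thetaSum, adjoinVertices]
  adj_right := by simp [inj₃, thetaSum, adjoinVertices]
  eq_of_adj := by
    rintro x ((y | y | y) | (_ | _)) <;> simp [inj₃, thetaSum, adjoinVertices]

lemma isTheta : IsTheta (thetaSum e₁ e₂ e₃) (branch V₁ V₂ V₃) (leftTerminal e₁ e₂ e₃)
    (rightTerminal e₁ e₂ e₃) (.inr true) (.inr false) where
  branch := by
    simp only [Fin.forall_fin_succ, IsEmpty.forall_iff, and_true]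
    exact ⟨(isEdgeBranch₁ ..).isBranch, (isEdgeBranch₂ ..).isBranch, (isEdgeBranch₃ ..).isBranch⟩
  disjoint i j hij := by
    rw [Function.onFun, Set.disjoint_left]
    fin_cases i <;> fin_cases j <;> simp_all [branch, inj₁, inj₂, inj₃]
  cover := by
    rintro ((x | x | x) | (_ | _)) <;> simp [branch, inj₁, inj₂, inj₃, Fin.exists_fin_succ]
  neighborSet_left_pole := by
    ext ((x | x | x) | (_ | _)) <;>
      simp [thetaSum, adjoinVertices, leftTerminal, inj₁, inj₂, inj₃, eq_comm]
  neighborSet_right_pole := by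
    ext ((x | x | x) | (_ | _)) <;>
      simp [thetaSum, adjoinVertices, rightTerminal, inj₁, inj₂, inj₃, eq_comm]

lemma ncard_neighborSet (h₁ : ∀ x, (G₁.neighborSet x).ncard = 3)
    (h₂ : ∀ x, (G₂.neighborSet x).ncard = 3) (h₃ : ∀ x, (G₃.neighborSet x).ncard = 3) :
    ∀ x, ((thetaSum e₁ e₂ e₃).neighborSet x).ncard = 3 := by
  have hθ := isTheta e₁ e₂ e₃
  rintro ((x | x | x) | (_ | _))
  · exact ((isEdgeBranch₁ e₁ e₂ e₃).ncard_neighborSet x).trans (h₁ x)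
  · exact ((isEdgeBranch₂ e₁ e₂ e₃).ncard_neighborSet x).trans (h₂ x)
  · exact ((isEdgeBranch₃ e₁ e₂ e₃).ncard_neighborSet x).trans (h₃ x)
  · exact hθ.symm.ncard_neighborSet_left_pole.trans (Nat.card_fin 3)
  · exact hθ.ncard_neighborSet_left_pole.trans (Nat.card_fin 3)

lemma colorable_two (h₁ : G₁.Colorable 2) (h₂ : G₂.Colorable 2) (h₃ : G₃.Colorable 2) :
    (thetaSum e₁ e₂ e₃).Colorable 2 := by
  obtain ⟨C₁, hfst₁, hsnd₁⟩ := exists_coloring_eq_zero_one h₁ e₁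
  obtain ⟨C₂, hfst₂, hsnd₂⟩ := exists_coloring_eq_zero_one h₂ e₂
  obtain ⟨C₃, hfst₃, hsnd₃⟩ := exists_coloring_eq_zero_one h₃ e₃
  let C := Coloring.sum (C₁.comp (.ofLE (deleteEdges_le {e₁.edge})))
    (Coloring.sum (C₂.comp (.ofLE (deleteEdges_le {e₂.edge})))
      (C₃.comp (.ofLE (deleteEdges_le {e₃.edge}))))
  refine colorable_adjoinVertices C (fun pole => cond pole 1 0) ?_
  rintro (_ | _) x (rfl | rfl | rfl) <;>
    simp [C, Coloring.sum, hfst₁, hfst₂, hfst₃, hsnd₁, hsnd₂, hsnd₃]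

lemma ncard_branch {k : ℕ} (h₁ : Nat.card V₁ = k) (h₂ : Nat.card V₂ = k) (h₃ : Nat.card V₃ = k) :
    ∀ i, (branch V₁ V₂ V₃ i).ncard = k := by
  simp only [Fin.forall_fin_succ, IsEmpty.forall_iff, and_true]
  exact ⟨(Set.ncard_range_of_injective inj₁.injective).trans h₁,
    (Set.ncard_range_of_injective inj₂.injective).trans h₂,
    (Set.ncard_range_of_injective inj₃.injective).trans h₃⟩

lemma reachable_leftTerminal [Finite V₁] [Finite V₂] [Finite V₃] (h₁ : TwoFactorHamiltonian G₁)
    (h₂ : TwoFactorHamiltonian G₂) (h₃ : TwoFactorHamiltonian G₃)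
    {F : SimpleGraph ((V₁ ⊕ V₂ ⊕ V₃) ⊕ Bool)} (hF : IsTwoFactor (thetaSum e₁ e₂ e₃) F) :
    ∀ i, ∀ x ∈ branch V₁ V₂ V₃ i, F.Reachable (leftTerminal e₁ e₂ e₃ i) x := by
  simp only [Fin.forall_fin_succ, IsEmpty.forall_iff, and_true]
  exact ⟨fun _ => (isEdgeBranch₁ ..).reachable_left_terminal h₁ hF,
    fun _ => (isEdgeBranch₂ ..).reachable_left_terminal h₂ hF,
    fun _ => (isEdgeBranch₃ ..).reachable_left_terminal h₃ hF⟩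

end thetaSum

end ThetaSum

/-- for `i = 1, 2, 3` let `Gᵢ` be a 2-factor Hamiltonian cubic bipartite
graph with `k` vertices and let `eᵢ = uᵢvᵢ` be an edge of `Gᵢ`.  Let `G` be the graph
(on the vertex set `(V₁ ⊕ V₂ ⊕ V₃) ⊕ Bool`, where `inr true = w` and `inr false = z`)
obtained from the disjoint union of the graphs `Gᵢ - eᵢ` by adding two new vertices `w`
and `z` and the six new edges `wuᵢ` and `zvᵢ`, `i = 1, 2, 3`.  Then `G` is a connected
cubic bipartite graph of edge-connectivity two which is 2-factor isomorphic but not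
Hamiltonian. -/
theorem stmt_9 {V₁ V₂ V₃ : Type*} [Fintype V₁] [Fintype V₂] [Fintype V₃] (k : ℕ)
    (G₁ : SimpleGraph V₁) (G₂ : SimpleGraph V₂) (G₃ : SimpleGraph V₃)
    (hk₁ : Fintype.card V₁ = k) (hk₂ : Fintype.card V₂ = k) (hk₃ : Fintype.card V₃ = k)
    (hcub₁ : ∀ v, (G₁.neighborSet v).ncard = 3) (hbip₁ : G₁.Colorable 2)
    (h2fh₁ : TwoFactorHamiltonian G₁)
    (hcub₂ : ∀ v, (G₂.neighborSet v).ncard = 3) (hbip₂ : G₂.Colorable 2)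
    (h2fh₂ : TwoFactorHamiltonian G₂)
    (hcub₃ : ∀ v, (G₃.neighborSet v).ncard = 3) (hbip₃ : G₃.Colorable 2)
    (h2fh₃ : TwoFactorHamiltonian G₃)
    (u₁ v₁ : V₁) (u₂ v₂ : V₂) (u₃ v₃ : V₃)
    (he₁ : G₁.Adj u₁ v₁) (he₂ : G₂.Adj u₂ v₂) (he₃ : G₃.Adj u₃ v₃)
    (G : SimpleGraph ((V₁ ⊕ V₂ ⊕ V₃) ⊕ Bool))
    (hG : ∀ a b : (V₁ ⊕ V₂ ⊕ V₃) ⊕ Bool, G.Adj a b ↔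
      ((∃ p q : V₁, a = Sum.inl (Sum.inl p) ∧ b = Sum.inl (Sum.inl q) ∧
          G₁.Adj p q ∧ s(p, q) ≠ s(u₁, v₁)) ∨
       (∃ p q : V₂, a = Sum.inl (Sum.inr (Sum.inl p)) ∧ b = Sum.inl (Sum.inr (Sum.inl q)) ∧
          G₂.Adj p q ∧ s(p, q) ≠ s(u₂, v₂)) ∨
       (∃ p q : V₃, a = Sum.inl (Sum.inr (Sum.inr p)) ∧ b = Sum.inl (Sum.inr (Sum.inr q)) ∧
          G₃.Adj p q ∧ s(p, q) ≠ s(u₃, v₃)) ∨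
       (a = Sum.inr true ∧ (b = Sum.inl (Sum.inl u₁) ∨
          b = Sum.inl (Sum.inr (Sum.inl u₂)) ∨ b = Sum.inl (Sum.inr (Sum.inr u₃)))) ∨
       (b = Sum.inr true ∧ (a = Sum.inl (Sum.inl u₁) ∨
          a = Sum.inl (Sum.inr (Sum.inl u₂)) ∨ a = Sum.inl (Sum.inr (Sum.inr u₃)))) ∨
       (a = Sum.inr false ∧ (b = Sum.inl (Sum.inl v₁) ∨
          b = Sum.inl (Sum.inr (Sum.inl v₂)) ∨ b = Sum.inl (Sum.inr (Sum.inr v₃)))) ∨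
       (b = Sum.inr false ∧ (a = Sum.inl (Sum.inl v₁) ∨
          a = Sum.inl (Sum.inr (Sum.inl v₂)) ∨ a = Sum.inl (Sum.inr (Sum.inr v₃)))))) :
    G.Connected ∧ (∀ v, (G.neighborSet v).ncard = 3) ∧ G.Colorable 2 ∧
      EdgeConnectivityTwo G ∧ TwoFactorIsomorphic G ∧
      ¬ ∃ H, IsTwoFactor G H ∧ H.Connected := by
  obtain ⟨e₁, e₂, e₃, rfl⟩ :
      ∃ (e₁ : G₁.Dart) (e₂ : G₂.Dart) (e₃ : G₃.Dart), G = thetaSum e₁ e₂ e₃ := by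
    refine ⟨⟨(u₁, v₁), he₁⟩, ⟨(u₂, v₂), he₂⟩, ⟨(u₃, v₃), he₃⟩, ?_⟩
    ext x y
    rw [hG]
    rcases x with ((x | x | x) | (_ | _)) <;> rcases y with ((y | y | y) | (_ | _)) <;>
      simp [thetaSum, adjoinVertices]
  have hθ := thetaSum.isTheta e₁ e₂ e₃
  have hcub := thetaSum.ncard_neighborSet e₁ e₂ e₃ hcub₁ hcub₂ hcub₃
  have hbip := thetaSum.colorable_two e₁ e₂ e₃ hbip₁ hbip₂ hbip₃
  have htraverse {F} := thetaSum.reachable_leftTerminal (F := F) e₁ e₂ e₃ h2fh₁ h2fh₂ h2fh₃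
  have hsize := thetaSum.ncard_branch (Nat.card_eq_fintype_card.trans hk₁)
    (Nat.card_eq_fintype_card.trans hk₂) (Nat.card_eq_fintype_card.trans hk₃)
  obtain ⟨F₀, hF₀, -⟩ := exists_isTwoFactor_adj (by norm_num) hcub hbip (hθ.adj_left_pole 0)
  have hconn := hθ.connected fun i x hx => (htraverse hF₀ i x hx).mono hF₀.1
  have hbridgeless := isEdgeConnected_two_of_regular_bipartite (by norm_num) hconn.preconnected
    hcub hbip
  exact ⟨hconn, hcub, hbip, (hθ.branch 0).edgeConnectivityTwo (hθ.adj_left_pole 0).symm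
      (hθ.symm.adj_left_pole 0).symm hconn hbridgeless,
    ⟨⟨F₀, hF₀⟩, fun _ _ hF hF' =>
      hθ.nonempty_iso (Nat.card_fin 3) hsize hF hF' (htraverse hF) (htraverse hF')⟩,
    hθ.not_exists_connected_isTwoFactor (Nat.card_fin 3)⟩
end

section
/- Let G be an essentially 4-edge-connected pseudo 2-factor isomorphic cubic bipartite graph. If G contains a cycle of length 4, then G is isomorphic to K_{3,3}. -/
open SimpleGraph

/-- The number of cycles of a 2-factor `F` is the number of its connected components. -/
noncomputable def numCycles {V : Type*} (F : SimpleGraph V) : ℕ :=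
  Nat.card F.ConnectedComponent

/-- A graph admitting a 2-factor is pseudo 2-factor isomorphic if the parity of the
number of cycles in a 2-factor is the same for all of its 2-factors. -/
def PseudoTwoFactorIsomorphic {V : Type*} (G : SimpleGraph V) : Prop :=
  (∃ F, IsTwoFactor G F) ∧
    ∀ F F', IsTwoFactor G F → IsTwoFactor G F' → numCycles F % 2 = numCycles F' % 2

/-- `G` is 3-edge-connected: it is connected and deleting any set of at most two of its
edges leaves it connected. -/
def ThreeEdgeConnected {V : Type*} (G : SimpleGraph V) : Prop :=
  G.Connected ∧ ∀ E₁ : Set (Sym2 V), E₁ ⊆ G.edgeSet → E₁.ncard ≤ 2 →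
    (G.deleteEdges E₁).Connected

/-- `G` is essentially 4-edge-connected: it is 3-edge-connected and has no non-trivial
3-edge-cut, i.e. every set of 3 edges whose deletion disconnects `G` leaves a component
with fewer than two vertices. -/
def EssentiallyFourEdgeConnected {V : Type*} (G : SimpleGraph V) : Prop :=
  ThreeEdgeConnected G ∧ ∀ E₁ : Set (Sym2 V), E₁ ⊆ G.edgeSet → E₁.ncard = 3 →
    ¬ (G.deleteEdges E₁).Connected →
      ∃ c : (G.deleteEdges E₁).ConnectedComponent, c.supp.ncard < 2

/-!
If `f` and `g` are disjoint perfect matchings of a graph with parts `A` and `B`, the cycles of the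
2-factor `f ∪ g` correspond to the cycles of the permutation `g⁻¹ ∘ f` of `A`, so `sign (g⁻¹ ∘ f)`
determines the parity of their number. Composing `g` with a transposition therefore changes this
parity.

Let `x` and `y` lie on opposite corners of a 4-cycle and suppose that their third neighbours
`u` and `w` differ. Because every nontrivial cut has at least four edges, Hall's theorem provides a
perfect matching `f` through `xu` and `yw`. The 2-regular graph `G - f` has a perfect matching `g`,
and exchanging the values of `g` at `x` and `y` around the 4-cycle gives another perfect matching
disjoint from `f`, contradicting the parity condition. Hence `x` and `y` have the same three
neighbours. The cut separating these five vertices from the rest has at most three edges, so at most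
one vertex remains, and a cubic bipartite graph on at most six vertices is `K_{3,3}`.
-/

open Finset

section AlternatingCycles

variable {A B : Type*}

/-- The union of the perfect matchings `{a, f a}` and `{a, g a}` of `A ⊕ B`, as a simple graph;
an edge belonging to both matchings occurs only once. -/
def matchingUnion (f g : A ≃ B) : SimpleGraph (A ⊕ B) where
  Adj
    | .inl a, .inr b => f a = b ∨ g a = b
    | .inr b, .inl a => f a = b ∨ g a = b
    | _, _ => False
  symm := ⟨by rintro (a | b) (a' | b') h <;> exact h⟩
  loopless := ⟨by rintro (a | b) h <;> exact h⟩

lemma neighborSet_matchingUnion_inl (f g : A ≃ B) (a : A) :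
    (matchingUnion f g).neighborSet (.inl a) = Sum.inr '' {f a, g a} := by
  ext (a' | b) <;> simp [matchingUnion, eq_comm]

lemma neighborSet_matchingUnion_inr (f g : A ≃ B) (b : B) :
    (matchingUnion f g).neighborSet (.inr b) = Sum.inl '' {f.symm b, g.symm b} := by
  ext (a | b') <;> simp [matchingUnion, Equiv.eq_symm_apply]

theorem ncard_neighborSet_matchingUnion {f g : A ≃ B} (hfg : ∀ a, f a ≠ g a) (v : A ⊕ B) :
    ((matchingUnion f g).neighborSet v).ncard = 2 := by
  rcases v with a | b
  · rw [neighborSet_matchingUnion_inl, Set.ncard_image_of_injective _ Sum.inr_injective,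
      Set.ncard_pair (hfg a)]
  · have hne : f.symm b ≠ g.symm b := fun h => hfg (f.symm b) (by
      rw [f.apply_symm_apply, h, g.apply_symm_apply])
    rw [neighborSet_matchingUnion_inr, Set.ncard_image_of_injective _ Sum.inl_injective,
      Set.ncard_pair hne]

lemma reachable_matchingUnion_elim (f g : A ≃ B) (v : A ⊕ B) :
    (matchingUnion f g).Reachable v (.inl (Sum.elim id g.symm v)) := by
  rcases v with a | b
  · exact .rfl
  · exact Adj.reachable (Or.inr (g.apply_symm_apply b))

lemma reachable_matchingUnion_of_sameCycle {f g : A ≃ B} {a a' : A}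
    (h : Equiv.Perm.SameCycle (f.trans g.symm) a a') :
    (matchingUnion f g).Reachable (.inl a) (.inl a') := by
  set π : Equiv.Perm A := f.trans g.symm
  have reachable_apply (c : A) : (matchingUnion f g).Reachable (.inl c) (.inl (π c)) :=
    have along_f : (matchingUnion f g).Adj (.inl c) (.inr (f c)) := Or.inl rfl
    along_f.reachable.trans (reachable_matchingUnion_elim f g (.inr (f c)))
  obtain ⟨n, rfl⟩ := h
  induction n with
  | zero => exact .rfl
  | succ n ih =>
    rw [add_comm, zpow_one_add, Equiv.Perm.mul_apply]
    exact ih.trans (reachable_apply _)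
  | pred n ih =>
    have back := (reachable_apply (π⁻¹ ((π ^ (-(n : ℤ))) a))).symm
    rw [← Equiv.Perm.mul_apply, mul_inv_cancel, Equiv.Perm.one_apply] at back
    rw [sub_eq_neg_add, zpow_add, zpow_neg_one, Equiv.Perm.mul_apply]
    exact ih.trans back

lemma sameCycle_of_adj_matchingUnion {f g : A ≃ B} {v w : A ⊕ B}
    (h : (matchingUnion f g).Adj v w) :
    Equiv.Perm.SameCycle (f.trans g.symm) (Sum.elim id g.symm v) (Sum.elim id g.symm w) := by
  have of_adj (a : A) (b : B) (h : f a = b ∨ g a = b) :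
      Equiv.Perm.SameCycle (f.trans g.symm) a (g.symm b) := by
    rcases h with rfl | rfl
    · exact ⟨1, by simp⟩
    · exact ⟨0, by simp⟩
  rcases v with a | b <;> rcases w with a' | b'
  · exact h.elim
  · exact of_adj a b' h
  · exact (of_adj a' b h).symm
  · exact h.elim

theorem reachable_matchingUnion_iff {f g : A ≃ B} {v w : A ⊕ B} :
    (matchingUnion f g).Reachable v w ↔
      Equiv.Perm.SameCycle (f.trans g.symm) (Sum.elim id g.symm v) (Sum.elim id g.symm w) := by
  constructor
  · rintro ⟨p⟩
    induction p with
    | nil => exact .refl _ _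
    | cons hadj _ ih => exact (sameCycle_of_adj_matchingUnion hadj).trans ih
  · intro h
    exact (reachable_matchingUnion_elim f g v).trans <|
      (reachable_matchingUnion_of_sameCycle h).trans (reachable_matchingUnion_elim f g w).symm

variable [DecidableEq A]

theorem numCycles_matchingUnion [Fintype A] {f g : A ≃ B} (hfg : ∀ a, f a ≠ g a) :
    numCycles (matchingUnion f g) = #(Equiv.Perm.cycleFactorsFinset (f.trans g.symm)) := by
  set π : Equiv.Perm A := f.trans g.symm with hπ
  have mem_support (a : A) : a ∈ π.support := by
    simpa [hπ, Equiv.symm_apply_eq] using hfg a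
  let toCycle (v : A ⊕ B) : π.cycleFactorsFinset :=
    ⟨π.cycleOf (Sum.elim id g.symm v),
      Equiv.Perm.cycleOf_mem_cycleFactorsFinset_iff.2 (mem_support _)⟩
  have toCycle_eq_iff (v w : A ⊕ B) :
      toCycle v = toCycle w ↔ (matchingUnion f g).Reachable v w := by
    rw [reachable_matchingUnion_iff, Subtype.mk.injEq,
      Equiv.Perm.sameCycle_iff_cycleOf_eq_of_mem_support (mem_support _) (mem_support _)]
  have toCycle_surjective : Function.Surjective toCycle := by
    rintro ⟨τ, hτ⟩
    obtain ⟨a, ha⟩ := (Equiv.Perm.mem_cycleFactorsFinset_iff.1 hτ).1.nonempty_support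
    exact ⟨.inl a, Subtype.ext (Equiv.Perm.cycle_is_cycleOf ha hτ).symm⟩
  let componentToCycle : (matchingUnion f g).ConnectedComponent → π.cycleFactorsFinset :=
    Quot.lift toCycle fun v w => (toCycle_eq_iff v w).2
  have bijective : Function.Bijective componentToCycle := by
    constructor
    · rintro ⟨v⟩ ⟨w⟩ h
      exact ConnectedComponent.sound ((toCycle_eq_iff v w).1 h)
    · exact fun τ => (toCycle_surjective τ).imp' (Quot.mk _) fun _ h => h
  rw [numCycles, Nat.card_eq_of_bijective _ bijective, Nat.card_eq_fintype_card,
    Fintype.card_coe]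

theorem sign_trans_symm_eq_neg_one_pow [Fintype A] {f g : A ≃ B} (hfg : ∀ a, f a ≠ g a) :
    Equiv.Perm.sign (f.trans g.symm) =
      (-1) ^ (Fintype.card A + numCycles (matchingUnion f g)) := by
  have support_eq : Equiv.Perm.support (f.trans g.symm) = univ := by
    ext a
    simpa [Equiv.symm_apply_eq] using hfg a
  rw [Equiv.Perm.sign_of_cycleType, Equiv.Perm.sum_cycleType, support_eq, card_univ,
    Equiv.Perm.cycleType_def, Multiset.card_map, card_val, numCycles_matchingUnion hfg]

theorem numCycles_matchingUnion_swap_mod_two_ne [Finite A] {f g : A ≃ B} {x y : A} (hxy : x ≠ y)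
    (hfg : ∀ a, f a ≠ g a) (hfg' : ∀ a, f a ≠ (Equiv.swap x y).trans g a) :
    numCycles (matchingUnion f g) % 2 ≠
      numCycles (matchingUnion f ((Equiv.swap x y).trans g)) % 2 := by
  have := Fintype.ofFinite A
  intro same_parity
  have sign_neg : Equiv.Perm.sign (f.trans ((Equiv.swap x y).trans g).symm) =
      -Equiv.Perm.sign (f.trans g.symm) := by
    rw [show f.trans ((Equiv.swap x y).trans g).symm = Equiv.swap x y * f.trans g.symm from rfl,
      Equiv.Perm.sign_mul, Equiv.Perm.sign_swap hxy, neg_one_mul]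
  have sign_eq : Equiv.Perm.sign (f.trans g.symm) =
      Equiv.Perm.sign (f.trans ((Equiv.swap x y).trans g).symm) := by
    rw [sign_trans_symm_eq_neg_one_pow hfg, sign_trans_symm_eq_neg_one_pow hfg']
    exact neg_one_pow_congr (by grind)
  exact units_ne_neg_self _ (sign_eq.trans sign_neg)

end AlternatingCycles

section SwitchingTwoFactors

variable {V : Type*}

lemma numCycles_congr {W : Type*} {F : SimpleGraph V} {F' : SimpleGraph W} (φ : F ≃g F') :
    numCycles F = numCycles F' :=
  Nat.card_congr φ.connectedComponentEquiv

theorem isTwoFactor_map_matchingUnion {G : SimpleGraph V} {s : Set V} [DecidablePred (· ∈ s)]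
    {f g : s ≃ ↥sᶜ} (hf : ∀ a : s, G.Adj a (f a)) (hg : ∀ a : s, G.Adj a (g a))
    (hfg : ∀ a, f a ≠ g a) :
    IsTwoFactor G ((matchingUnion f g).map (Equiv.Set.sumCompl s).toEmbedding) := by
  constructor
  · rw [map_le_iff_le_comap]
    rintro (a | b) (a' | b') h
    · exact h.elim
    · rcases h with rfl | rfl
      exacts [hf a, hg a]
    · rcases h with rfl | rfl
      exacts [(hf a').symm, (hg a').symm]
    · exact h.elim
  · intro v
    obtain ⟨z, rfl⟩ := (Equiv.Set.sumCompl s).surjective v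
    rw [← ncard_neighborSet_matchingUnion hfg z]
    exact (Nat.card_congr ((Iso.map (Equiv.Set.sumCompl s) _).mapNeighborSet z)).symm

theorem not_pseudoTwoFactorIsomorphic_of_switch [Finite V] {G : SimpleGraph V} {s : Set V}
    {f g : s ≃ ↥sᶜ} (hf : ∀ a : s, G.Adj a (f a)) (hg : ∀ a : s, G.Adj a (g a))
    (hfg : ∀ a, f a ≠ g a) {x y : s} (hxy : x ≠ y) (hx : G.Adj x (g y)) (hy : G.Adj y (g x))
    (hfx : f x ≠ g y) (hfy : f y ≠ g x) : ¬ PseudoTwoFactorIsomorphic G := by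
  classical
  have := Fintype.ofFinite V
  set g' := (Equiv.swap x y).trans g with hg'
  have switched (P : s → ↥sᶜ → Prop) (hP : ∀ a, P a (g a)) (hPx : P x (g y)) (hPy : P y (g x))
      (a : s) : P a (g' a) := by
    rw [hg', Equiv.trans_apply, Equiv.swap_apply_def]
    split_ifs with hax hay
    exacts [hax ▸ hPx, hay ▸ hPy, hP a]
  have hg'_adj : ∀ a : s, G.Adj a (g' a) := switched (fun a b => G.Adj a b) hg hx hy
  have hfg' : ∀ a, f a ≠ g' a := switched (fun a b => f a ≠ b) hfg hfx hfy
  intro hpseudo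
  apply numCycles_matchingUnion_swap_mod_two_ne hxy hfg hfg'
  rw [numCycles_congr (Iso.map (Equiv.Set.sumCompl s) (matchingUnion f g)),
    numCycles_congr (Iso.map (Equiv.Set.sumCompl s) (matchingUnion f g'))]
  exact hpseudo.2 _ _ (isTwoFactor_map_matchingUnion hf hg hfg)
    (isTwoFactor_map_matchingUnion hf hg'_adj hfg')

end SwitchingTwoFactors

section EdgeCuts

variable {V : Type*} {G : SimpleGraph V}

lemma exists_adj_mem_notMem_of_connected (hG : G.Connected) {S : Set V} (hS : S.Nonempty)
    (hSc : Sᶜ.Nonempty) : ∃ x ∈ S, ∃ y ∉ S, G.Adj x y := by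
  obtain ⟨a, ha⟩ := hS
  obtain ⟨b, hb⟩ := hSc
  obtain ⟨p⟩ := hG a b
  obtain ⟨d, -, hd, hd'⟩ := p.exists_boundary_dart S ha hb
  exact ⟨d.fst, hd, d.snd, hd', d.adj⟩

lemma not_connected_deleteEdges_between {S : Set V} (hS : S.Nonempty) (hSc : Sᶜ.Nonempty) :
    ¬ (G.deleteEdges (G.between S Sᶜ).edgeSet).Connected := by
  intro h
  obtain ⟨x, hx, y, hy, hxy⟩ := exists_adj_mem_notMem_of_connected h hS hSc
  rw [deleteEdges_adj] at hxy
  exact hxy.2 ⟨hxy.1, .inl ⟨hx, hy⟩⟩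

lemma exists_incidenceSet_subset_of_ncard_supp_lt_two [Finite V] {E : Set (Sym2 V)}
    (c : (G.deleteEdges E).ConnectedComponent) (hc : c.supp.ncard < 2) :
    ∃ v, G.incidenceSet v ⊆ E := by
  obtain ⟨v, rfl⟩ := c.exists_rep
  refine ⟨v, fun e he => ?_⟩
  obtain ⟨w, rfl⟩ := Sym2.mem_iff_exists.1 he.2
  have hvw : G.Adj v w := he.1
  by_contra hE
  have hadj : (G.deleteEdges E).Adj v w := deleteEdges_adj.2 ⟨hvw, hE⟩
  refine hvw.ne ((Set.ncard_le_one_iff (Set.toFinite _)).1 (Nat.le_of_lt_succ hc) ?_ ?_)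
  · exact ConnectedComponent.connectedComponentMk_mem
  · exact ConnectedComponent.sound hadj.symm.reachable

lemma subsingleton_or_of_incidenceSet_eq_between (hG : G.Connected) {S : Set V} {v : V}
    (h : G.incidenceSet v = (G.between S Sᶜ).edgeSet) : S.Subsingleton ∨ Sᶜ.Subsingleton := by
  wlog hv : v ∈ S generalizing S
  · have := this (S := Sᶜ) (by rw [h, compl_compl, between_comm]) hv
    rwa [compl_compl, or_comm] at this
  by_contra! hnontriv
  obtain ⟨a, ha, hav⟩ := hnontriv.1.exists_ne v
  obtain ⟨x, ⟨hxS, hxv⟩, y, hy, hxy⟩ :=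
    exists_adj_mem_notMem_of_connected hG (S := S \ {v}) ⟨a, ha, hav⟩ ⟨v, by simp⟩
  by_cases hyS : y ∈ S
  · obtain rfl : y = v := by simpa [hyS] using hy
    have : s(x, y) ∈ (G.between S Sᶜ).edgeSet := h ▸ ⟨hxy, Sym2.mem_mk_right x y⟩
    simp [between_adj, hxS, hyS] at this
  · have hmem : s(x, y) ∈ G.incidenceSet v := h ▸ ⟨hxy, .inl ⟨hxS, hyS⟩⟩
    rcases Sym2.mem_iff.1 hmem.2 with rfl | rfl
    exacts [hxv rfl, hyS hv]

variable [Fintype V] [DecidableRel G.Adj]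

theorem four_le_ncard_edgeSet_between (hG : EssentiallyFourEdgeConnected G)
    (hreg : G.IsRegularOfDegree 3) {S : Set V} (hS : S.Nontrivial) (hSc : Sᶜ.Nontrivial) :
    4 ≤ (G.between S Sᶜ).edgeSet.ncard := by
  classical
  set E := (G.between S Sᶜ).edgeSet
  have hEG : E ⊆ G.edgeSet := edgeSet_mono between_le
  have hdisconn : ¬ (G.deleteEdges E).Connected :=
    not_connected_deleteEdges_between hS.nonempty hSc.nonempty
  have h2 : ¬ E.ncard ≤ 2 := fun h => hdisconn (hG.1.2 E hEG h)
  by_contra! h4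
  have h3 : E.ncard = 3 := by omega
  obtain ⟨c, hc⟩ := hG.2 E hEG h3 hdisconn
  obtain ⟨v, hv⟩ := exists_incidenceSet_subset_of_ncard_supp_lt_two c hc
  have hvE : G.incidenceSet v = E := by
    refine Set.eq_of_subset_of_ncard_le hv ?_
    rw [h3, Set.ncard_eq_toFinset_card', Set.toFinset_card, card_incidenceSet_eq_degree, hreg v]
  rcases subsingleton_or_of_incidenceSet_eq_between hG.1.1 hvE with h | h
  exacts [Set.not_subsingleton_iff.2 hS h, Set.not_subsingleton_iff.2 hSc h]

lemma card_interedges_univ {k : ℕ} (hreg : G.IsRegularOfDegree k) (S : Finset V) :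
    #(G.interedges S univ) = #S * k := by
  rw [interedges_def, card_filter, sum_product]
  simp_rw [← card_filter, ← neighborFinset_eq_filter, card_neighborFinset_eq_degree, hreg.degree_eq]
  rw [sum_const, smul_eq_mul]

lemma ncard_edgeSet_between_le_card_interedges [DecidableEq V] (S : Finset V) :
    (G.between S (S : Set V)ᶜ).edgeSet.ncard ≤ #(G.interedges S Sᶜ) := by
  have hsub : (G.between S (S : Set V)ᶜ).edgeSet ⊆
      (fun e : V × V => s(e.1, e.2)) '' (G.interedges S Sᶜ : Set (V × V)) := by
    intro e he
    induction e with | _ x y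
    rcases he with ⟨hxy, ⟨hx, hy⟩ | ⟨hx, hy⟩⟩
    · exact ⟨(x, y), by simpa [mem_interedges_iff, hxy] using ⟨hx, hy⟩, rfl⟩
    · exact ⟨(y, x), by simpa [mem_interedges_iff, hxy.symm] using ⟨hy, hx⟩, Sym2.eq_swap⟩
  calc _ ≤ _ := Set.ncard_le_ncard hsub
    _ ≤ _ := Set.ncard_image_le
    _ = _ := Set.ncard_coe_finset _

-- Every edge at `S` ends in `N(S)`, so all edges leaving `S ∪ N(S)` leave from `N(S)`.
lemma card_interedges_union_biUnion_compl_add_le [DecidableEq V] {k : ℕ}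
    (hreg : G.IsRegularOfDegree k) (S : Finset V) :
    #(G.interedges (S ∪ S.biUnion (G.neighborFinset ·)) (S ∪ S.biUnion (G.neighborFinset ·))ᶜ) +
      #S * k ≤ #(S.biUnion (G.neighborFinset ·)) * k := by
  set T := S.biUnion (G.neighborFinset ·)
  have mem_T {a b : V} (ha : a ∈ S) (hab : G.Adj a b) : b ∈ T :=
    mem_biUnion.2 ⟨a, ha, (G.mem_neighborFinset a b).2 hab⟩
  have card_ST : #(G.interedges T S) = #S * k := by
    rw [← card_interedges_univ hreg]
    have := G.symm
    refine (Rel.card_interedges_comm T S).trans (congrArg card ?_)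
    ext ⟨a, b⟩
    simp only [Rel.mem_interedges_iff, mem_interedges_iff, mem_univ, true_and]
    exact and_congr_right fun ha => and_iff_right_of_imp (mem_T ha)
  have disj : Disjoint (G.interedges (S ∪ T) (S ∪ T)ᶜ) (G.interedges T S) := by
    rw [Finset.disjoint_left]
    rintro ⟨a, b⟩ h h'
    simp only [mem_interedges_iff, mem_compl, mem_union, not_or] at h h'
    exact h.2.1.1 h'.2.1
  have hsub : G.interedges (S ∪ T) (S ∪ T)ᶜ ∪ G.interedges T S ⊆ G.interedges T univ := by
    refine union_subset ?_ (G.interedges_mono subset_rfl (subset_univ S))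
    rintro ⟨a, b⟩ h
    simp only [mem_interedges_iff, mem_compl, mem_union, not_or, mem_univ, true_and] at h ⊢
    exact ⟨h.1.resolve_left fun ha => h.2.1.2 (mem_T ha h.2.2), h.2.2⟩
  rw [← card_ST, ← card_union_of_disjoint disj, ← card_interedges_univ hreg]
  exact card_le_card hsub

theorem card_add_two_le_card_biUnion_neighborFinset [DecidableEq V]
    (hG : EssentiallyFourEdgeConnected G) (hreg : G.IsRegularOfDegree 3) {S : Finset V}
    (hS : S.Nonempty) (hSc : (S ∪ S.biUnion (G.neighborFinset ·))ᶜ.Nontrivial) :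
    #S + 2 ≤ #(S.biUnion (G.neighborFinset ·)) := by
  set T := S.biUnion (G.neighborFinset ·)
  have hST : (S ∪ T).Nontrivial := by
    obtain ⟨a, ha⟩ := hS
    obtain ⟨b, hb⟩ := (G.degree_pos_iff_exists_adj a).1 (by rw [hreg a]; norm_num)
    have hbT : b ∈ T := mem_biUnion.2 ⟨a, ha, (G.mem_neighborFinset a b).2 hb⟩
    exact ⟨a, by simp [ha], b, by simp [hbT], hb.ne⟩
  have four_le := four_le_ncard_edgeSet_between hG hreg (S := ↑(S ∪ T))
    hST (by rwa [← coe_compl])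
  have cut_le := ncard_edgeSet_between_le_card_interedges (G := G) (S ∪ T)
  have cut_add_le : #(G.interedges (S ∪ T) (S ∪ T)ᶜ) + #S * 3 ≤ #T * 3 :=
    card_interedges_union_biUnion_compl_add_le hreg S
  omega

end EdgeCuts

section Hall

variable {ι α : Type*} [DecidableEq α]

theorem exists_injective_eqOn_of_card_add_le {t : ι → Finset α} {P : Finset ι} {m : ι → α}
    (hinj : Set.InjOn m P) (hmem : ∀ i ∈ P, m i ∈ t i)
    (hall : ∀ S : Finset ι, S.Nonempty → Disjoint S P → #S + #P ≤ #(S.biUnion t)) :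
    ∃ f : ι → α, f.Injective ∧ (∀ i, f i ∈ t i) ∧ Set.EqOn f m P := by
  classical
  have hall' (S : Finset {i // i ∉ P}) : #S ≤ #(S.biUnion fun i => t i \ P.image m) := by
    rcases S.eq_empty_or_nonempty with rfl | hS
    · exact zero_le
    have biUnion_eq : (S.biUnion fun i => t i \ P.image m) =
        (S.map (.subtype _)).biUnion t \ P.image m := by
      ext b
      simp only [mem_biUnion, mem_sdiff, mem_map, Function.Embedding.subtype_apply]
      grind
    have surplus := hall (S.map (.subtype _)) hS.map <| disjoint_left.2 fun i hi => by
      obtain ⟨j, -, rfl⟩ := mem_map.1 hi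
      exact j.2
    have le_sdiff := le_card_sdiff (P.image m) ((S.map (.subtype _)).biUnion t)
    have image_le := card_image_le (s := P) (f := m)
    rw [card_map] at surplus
    rw [biUnion_eq]
    omega
  obtain ⟨g, hg, hgt⟩ := (all_card_le_biUnion_card_iff_exists_injective _).1 hall'
  refine ⟨fun i => if hi : i ∈ P then m i else g ⟨i, hi⟩, ?_, fun i => ?_, fun i hi => dif_pos hi⟩
  · refine Function.Injective.dite (· ∈ P) (f := fun i => m i) hinj.injective hg ?_
    intro i j hi hj hij
    exact (mem_sdiff.1 (hgt ⟨j, hj⟩)).2 (hij ▸ mem_image_of_mem m hi)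
  · dsimp only
    split_ifs with hi
    exacts [hmem i hi, (mem_sdiff.1 (hgt ⟨i, hi⟩)).1]

theorem exists_injective_of_le_card_of_card_le [Fintype ι] {t : ι → Finset α} {k : ℕ} (hk : 0 < k)
    (hle : ∀ i, k ≤ #(t i)) (hge : ∀ a, #{i | a ∈ t i} ≤ k) :
    ∃ f : ι → α, f.Injective ∧ ∀ i, f i ∈ t i := by
  refine (all_card_le_biUnion_card_iff_exists_injective t).1 fun S => ?_
  refine Nat.le_of_mul_le_mul_right ?_ hk
  refine card_mul_le_card_mul (fun i a => a ∈ t i) (fun i hi => ?_) fun a _ => ?_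
  · refine (hle i).trans (card_le_card fun a ha => ?_)
    exact mem_filter.2 ⟨mem_biUnion.2 ⟨i, hi, ha⟩, ha⟩
  · exact (card_le_card (filter_subset_filter _ (subset_univ S))).trans (hge a)

end Hall

section RegularBipartite

variable {V : Type*} [Fintype V] {G : SimpleGraph V} [DecidableRel G.Adj] {s t : Set V} {k : ℕ}

lemma card_filter_adj_eq_degree [Fintype t] (h : G.IsBipartiteWith s t) {a : V} (ha : a ∈ s) :
    #{b : t | G.Adj a b} = G.degree a := by
  rw [← card_neighborFinset_eq_degree, ← card_map (Function.Embedding.subtype _)]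
  congr 1
  ext b
  simpa using fun hab => isBipartiteWith_neighborSet_subset h ha hab

lemma card_eq_card_of_isBipartiteWith [Fintype s] [Fintype t] (h : G.IsBipartiteWith s t)
    (hreg : G.IsRegularOfDegree k) (hk : 0 < k) : Fintype.card s = Fintype.card t := by
  refine Nat.eq_of_mul_eq_mul_right hk
    (card_mul_eq_card_mul (fun (a : s) (b : t) => G.Adj a b) (fun a _ => ?_) fun b _ => ?_)
  · exact (card_filter_adj_eq_degree h a.2).trans (hreg a)
  · simp_rw [bipartiteBelow, G.adj_comm _ b]
    exact (card_filter_adj_eq_degree h.symm b.2).trans (hreg b)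

lemma exists_equiv_of_injective (h : G.IsBipartiteWith s t) (hreg : G.IsRegularOfDegree k)
    (hk : 0 < k) {f : s → t} (hf : f.Injective) : ∃ e : s ≃ t, ⇑e = f := by
  classical
  have hcard := card_eq_card_of_isBipartiteWith h hreg hk
  exact ⟨.ofBijective f ((Fintype.bijective_iff_injective_and_card f).2 ⟨hf, hcard⟩), rfl⟩

theorem exists_disjoint_matching (h : G.IsBipartiteWith s t) (hreg : G.IsRegularOfDegree k)
    (hk : 1 < k) {f : s ≃ t} (hf : ∀ a : s, G.Adj a (f a)) :
    ∃ g : s ≃ t, (∀ a : s, G.Adj a (g a)) ∧ ∀ a, f a ≠ g a := by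
  classical
  let N (a : s) : Finset t := ({b : t | G.Adj a b} : Finset t).erase (f a)
  have card_N (a : s) : #(N a) = k - 1 := by
    rw [card_erase_of_mem (by simpa using hf a), card_filter_adj_eq_degree h a.2, hreg a]
  have card_N' (b : t) : #{a | b ∈ N a} = k - 1 := by
    have : ({a | b ∈ N a} : Finset s) = ({a : s | G.Adj b a} : Finset s).erase (f.symm b) := by
      ext a
      simp [N, G.adj_comm, Equiv.eq_symm_apply, eq_comm]
    rw [this, card_erase_of_mem, card_filter_adj_eq_degree h.symm b.2, hreg b]
    simpa [G.adj_comm] using hf (f.symm b)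
  obtain ⟨g, hg, hgN⟩ := exists_injective_of_le_card_of_card_le (Nat.sub_pos_of_lt hk)
    (fun a => (card_N a).ge) fun b => (card_N' b).le
  obtain ⟨e, rfl⟩ := exists_equiv_of_injective h hreg (by omega) hg
  exact ⟨e, fun a => by simpa using mem_of_mem_erase (hgN a),
    fun a => (ne_of_mem_erase (hgN a)).symm⟩

lemma biUnion_neighborFinset_map_subtype [DecidableEq V] [Fintype t] (h : G.IsBipartiteWith s t)
    (S : Finset s) : (S.map (.subtype _)).biUnion (G.neighborFinset ·) =
      (S.biUnion fun a => {b : t | G.Adj a b}).map (.subtype _) := by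
  ext b
  simp only [mem_biUnion, mem_map, mem_neighborFinset, mem_filter_univ]
  constructor
  · rintro ⟨_, ⟨a, ha, rfl⟩, hab⟩
    exact ⟨⟨b, h.mem_of_mem_adj a.2 hab⟩, ⟨a, ha, hab⟩, rfl⟩
  · rintro ⟨b, ⟨a, ha, hab⟩, rfl⟩
    exact ⟨a, ⟨a, ha, rfl⟩, hab⟩

theorem exists_matching_of_adj_of_adj (hG : EssentiallyFourEdgeConnected G)
    (hreg : G.IsRegularOfDegree 3) (h : G.IsBipartiteWith s t) {x y : s} {u w : t} (hxy : x ≠ y)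
    (huw : u ≠ w) (hxu : G.Adj x u) (hyw : G.Adj y w) :
    ∃ f : s ≃ t, (∀ a : s, G.Adj a (f a)) ∧ f x = u ∧ f y = w := by
  classical
  let N (a : s) : Finset t := {b : t | G.Adj a b}
  let m (a : s) : t := if a = x then u else w
  have hmx : m x = u := if_pos rfl
  have hmy : m y = w := if_neg hxy.symm
  have surplus (S : Finset s) (hS : S.Nonempty) (hSxy : Disjoint S {x, y}) :
      #S + #{x, y} ≤ #(S.biUnion N) := by
    let S' : Finset V := S.map (.subtype _)
    have neighbors_eq : S'.biUnion (G.neighborFinset ·) = (S.biUnion N).map (.subtype _) :=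
      biUnion_neighborFinset_map_subtype h S
    have notMem (a : s) (ha : a ∉ S) : (a : V) ∈ (S' ∪ S'.biUnion (G.neighborFinset ·))ᶜ := by
      rw [neighbors_eq]
      simpa [S', ha] using fun hat => (Set.disjoint_left.1 h.disjoint a.2 hat).elim
    have hx : x ∉ S := fun hx => by simpa using disjoint_left.1 hSxy hx
    have hy : y ∉ S := fun hy => by simpa using disjoint_left.1 hSxy hy
    have := card_add_two_le_card_biUnion_neighborFinset hG hreg (hS.map (f := .subtype _))
      ⟨x, notMem x hx, y, notMem y hy, Subtype.coe_ne_coe.2 hxy⟩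
    rwa [neighbors_eq, card_map, card_map, ← card_pair hxy] at this
  obtain ⟨f, hf, hfN, hfm⟩ := exists_injective_eqOn_of_card_add_le (t := N) (P := {x, y}) (m := m)
    (by simp [hmx, hmy, huw]) (by simp [N, hmx, hmy, hxu, hyw]) surplus
  obtain ⟨e, rfl⟩ := exists_equiv_of_injective h hreg three_pos hf
  exact ⟨e, fun a => by simpa [N] using hfN a, (hfm (by simp)).trans hmx,
    (hfm (by simp)).trans hmy⟩

lemma adj_of_card_le_degree [Fintype t] (h : G.IsBipartiteWith s t) {a b : V} (ha : a ∈ s)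
    (hb : b ∈ t) (ht : Fintype.card t ≤ G.degree a) : G.Adj a b := by
  rw [← card_filter_adj_eq_degree h ha] at ht
  have := eq_univ_of_card _ (ht.antisymm (card_le_univ _)).symm
  exact (mem_filter_univ (⟨b, hb⟩ : t)).1 (this ▸ mem_univ _)

theorem nonempty_iso_completeBipartiteGraph [Nonempty V] (h : G.IsBipartiteWith s sᶜ)
    (hreg : G.IsRegularOfDegree k) (hV : Fintype.card V ≤ 2 * k) :
    Nonempty (G ≃g completeBipartiteGraph (Fin k) (Fin k)) := by
  classical
  have hk : 0 < k := by have := Fintype.card_pos (α := V); omega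
  have card_sides : Fintype.card s = Fintype.card ↥sᶜ := card_eq_card_of_isBipartiteWith h hreg hk
  have card_V : Fintype.card s + Fintype.card ↥sᶜ = Fintype.card V := by
    rw [← Fintype.card_sum, Fintype.card_congr (Equiv.Set.sumCompl s)]
  have le_card_compl : k ≤ Fintype.card ↥sᶜ := by
    obtain ⟨a⟩ : Nonempty s := Fintype.card_pos_iff.1 (by have := Fintype.card_pos (α := V); omega)
    rw [← hreg a, ← card_filter_adj_eq_degree h a.2]
    exact card_le_univ _
  have complete {a b : V} (ha : a ∈ s) (hb : b ∈ sᶜ) : G.Adj a b :=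
    adj_of_card_le_degree h ha hb (by rw [hreg a]; omega)
  let φ : completeBipartiteGraph s ↥sᶜ ≃g G :=
    { Equiv.Set.sumCompl s with
      map_rel_iff' := by
        rintro (a | b) (a' | b')
        · simpa using fun haa' => h.mem_of_mem_adj a.2 haa' a'.2
        · simpa using complete a.2 b'.2
        · simpa using (complete a'.2 b.2).symm
        · simpa using fun hbb' => b'.2 (h.symm.mem_of_mem_adj b.2 hbb') }
  exact ⟨φ.symm.trans <| completeBipartiteGraphCongr
    (Fintype.equivFinOfCardEq (by omega)) (Fintype.equivFinOfCardEq (by omega))⟩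

end RegularBipartite

section FourCycle

variable {V : Type*} {G : SimpleGraph V}

lemma exists_isBipartiteWith_compl_mem (h : G.Colorable 2) (v : V) :
    ∃ s : Set V, v ∈ s ∧ G.IsBipartiteWith s sᶜ := by
  obtain ⟨C⟩ := h
  refine ⟨{u | C u = C v}, rfl, disjoint_compl_right, fun a b hab => ?_⟩
  have hC : C a ≠ C b := C.valid hab
  simp only [Set.mem_compl_iff, Set.mem_ofPred_eq]
  omega

variable [Fintype V] [DecidableRel G.Adj]

lemma exists_two_le_card_inter_neighborFinset_of_isCycle [DecidableEq V] {v : V}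
    {p : G.Walk v v} (hp : p.IsCycle) (hlen : p.length = 4) :
    ∃ w ≠ v, 2 ≤ #(G.neighborFinset v ∩ G.neighborFinset w) := by
  match p, hp, hlen with
  | .cons (v := a) hva (.cons (v := w) haw (.cons (v := b) hwb (.cons hbv .nil))), hp, _ =>
    have hnodup := hp.support_nodup
    simp only [Walk.support_cons, Walk.support_nil, List.tail_cons, List.nodup_cons,
      List.mem_cons, List.not_mem_nil, or_false, not_or] at hnodup
    refine ⟨w, hnodup.2.1.2, ?_⟩
    rw [← card_pair hnodup.1.2.1]
    exact card_le_card (by simp [insert_subset_iff, hva, haw.symm, hbv.symm, hwb])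

lemma exists_adj_not_adj_of_neighborFinset_ne {k : ℕ} (hreg : G.IsRegularOfDegree k) {v w : V}
    (h : G.neighborFinset v ≠ G.neighborFinset w) : ∃ z, G.Adj v z ∧ ¬ G.Adj w z := by
  by_contra! hsub
  refine h (eq_of_subset_of_card_le (by simpa [subset_iff] using hsub) ?_)
  rw [card_neighborFinset_eq_degree, card_neighborFinset_eq_degree, hreg v, hreg w]

lemma adj_of_degree_le_card_inter_add_one [DecidableEq V] {v w z c : V}
    (h : G.degree v ≤ #(G.neighborFinset v ∩ G.neighborFinset w) + 1) (hvz : G.Adj v z)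
    (hwz : ¬ G.Adj w z) (hvc : G.Adj v c) (hcz : c ≠ z) : G.Adj w c := by
  by_contra hwc
  have one_lt : 1 < #(G.neighborFinset v \ G.neighborFinset w) :=
    one_lt_card.2 ⟨c, by simp [hvc, hwc], z, by simp [hvz, hwz], hcz⟩
  have card_eq := card_sdiff_add_card_inter (G.neighborFinset v) (G.neighborFinset w)
  rw [card_neighborFinset_eq_degree] at card_eq
  omega

theorem neighborFinset_eq_of_two_le_card_inter [DecidableEq V] (hG : EssentiallyFourEdgeConnected G)
    (hreg : G.IsRegularOfDegree 3) (hpseudo : PseudoTwoFactorIsomorphic G) {s : Set V}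
    (hs : G.IsBipartiteWith s sᶜ) {x y : V} (hx : x ∈ s)
    (hcommon : 2 ≤ #(G.neighborFinset x ∩ G.neighborFinset y)) :
    G.neighborFinset x = G.neighborFinset y := by
  by_contra hne
  have hcommon' : 2 ≤ #(G.neighborFinset y ∩ G.neighborFinset x) := by rwa [inter_comm]
  have hy : y ∈ s := by
    obtain ⟨z, hz⟩ := card_pos.1 (two_pos.trans_le hcommon)
    rw [mem_inter, mem_neighborFinset, mem_neighborFinset] at hz
    exact hs.mem_of_mem_adj' (hs.mem_of_mem_adj hx hz.1) hz.2
  obtain ⟨u, hxu, hyu⟩ := exists_adj_not_adj_of_neighborFinset_ne hreg hne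
  obtain ⟨w, hyw, hxw⟩ := exists_adj_not_adj_of_neighborFinset_ne hreg (Ne.symm hne)
  lift u to ↥sᶜ using hs.mem_of_mem_adj hx hxu
  lift w to ↥sᶜ using hs.mem_of_mem_adj hy hyw
  lift x to s using hx
  lift y to s using hy
  have hxy : x ≠ y := by rintro rfl; exact hne rfl
  have huw : u ≠ w := by rintro rfl; exact hxw hxu
  obtain ⟨f, hf, hfx, hfy⟩ := exists_matching_of_adj_of_adj hG hreg hs hxy huw hxu hyw
  obtain ⟨g, hg, hfg⟩ := exists_disjoint_matching hs hreg (by norm_num) hf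
  have hgx : G.Adj y (g x) :=
    adj_of_degree_le_card_inter_add_one (by rw [hreg x]; omega) hxu hyu (hg x)
      (Subtype.coe_ne_coe.2 (hfx ▸ (hfg x).symm))
  have hgy : G.Adj x (g y) :=
    adj_of_degree_le_card_inter_add_one (by rw [hreg y]; omega) hyw hxw (hg y)
      (Subtype.coe_ne_coe.2 (hfy ▸ (hfg y).symm))
  have hfx_ne : f x ≠ g y := by rw [hfx]; rintro rfl; exact hyu (hg y)
  have hfy_ne : f y ≠ g x := by rw [hfy]; rintro rfl; exact hxw (hg x)
  exact not_pseudoTwoFactorIsomorphic_of_switch hf hg hfg hxy hgy hgx hfx_ne hfy_ne hpseudo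

theorem card_le_six_of_neighborFinset_eq (hG : EssentiallyFourEdgeConnected G)
    (hreg : G.IsRegularOfDegree 3) {x y : V} (hxy : x ≠ y)
    (h : G.neighborFinset x = G.neighborFinset y) : Fintype.card V ≤ 6 := by
  classical
  have biUnion_eq : ({x, y} : Finset V).biUnion (G.neighborFinset ·) = G.neighborFinset x := by
    simp [h]
  have card_N : #(G.neighborFinset x) = 3 := hreg x
  have compl_le : #({x, y} ∪ G.neighborFinset x)ᶜ ≤ 1 := by
    by_contra! hnontriv
    have := card_add_two_le_card_biUnion_neighborFinset hG hreg (insert_nonempty x {y})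
      (by rwa [biUnion_eq, ← one_lt_card_iff_nontrivial])
    rw [biUnion_eq, card_pair hxy] at this
    omega
  have union_le := card_union_le {x, y} (G.neighborFinset x)
  have := card_compl_add_card ({x, y} ∪ G.neighborFinset x)
  rw [card_pair hxy] at union_le
  omega

end FourCycle

/-- an essentially 4-edge-connected pseudo 2-factor isomorphic cubic
bipartite graph containing a cycle of length 4 is isomorphic to `K_{3,3}`. -/
theorem stmt_14 {V : Type*} [Fintype V] (G : SimpleGraph V)
    (hcubic : ∀ v : V, (G.neighborSet v).ncard = 3)
    (hbip : G.Colorable 2)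
    (hess : EssentiallyFourEdgeConnected G)
    (hpseudo : PseudoTwoFactorIsomorphic G)
    (hC4 : ∃ (v : V) (w : G.Walk v v), w.IsCycle ∧ w.length = 4) :
    Nonempty (G ≃g completeBipartiteGraph (Fin 3) (Fin 3)) := by
  classical
  have hreg : G.IsRegularOfDegree 3 := fun v => by
    rw [← hcubic v, Set.ncard_eq_toFinset_card', ← card_neighborFinset_eq_degree, neighborFinset]
  obtain ⟨x, p, hp, hlen⟩ := hC4
  obtain ⟨y, hyx, hcommon⟩ := exists_two_le_card_inter_neighborFinset_of_isCycle hp hlen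
  obtain ⟨s, hx, hs⟩ := exists_isBipartiteWith_compl_mem hbip x
  have twins := neighborFinset_eq_of_two_le_card_inter hess hreg hpseudo hs hx hcommon
  have : Nonempty V := ⟨x⟩
  exact nonempty_iso_completeBipartiteGraph hs hreg
    (card_le_six_of_neighborFinset_eq hess hreg hyx.symm twins)
end
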